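/- arXiv:2209.13376 — 7 statements merged into one kernel-verified Lean document; each statement's English description precedes it below -/
import Mathlib

section
/- Let U ⊆ ℝ² be open, u ∈ C²(U, ℝ²) and Π ∈ C¹(U, ℝ) satisfy Δu = ∇Π and div u = 0 on U. Then at every point of U one has the pointwise identity ∂₂(‖∇u + (∇u)ᵀ‖_F²) = 4 div(T₁(u,Π) ∂₂u), where T₁(u,Π) ∂₂u denotes the vector field obtained by applying the matrix T₁(u,Π) to the vector ∂₂u. -/
/-!
Write `S = ∇u + (∇u)ᵀ` and `T = -Π E₂ + S`. Since `T` is symmetric,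
`div (T ∂₂u) = (div T) · ∂₂u + T : ∇∂₂u`. The first term vanishes because
`div T = -∇Π + Δu + ∇ div u = 0`. In the second, the pressure contributes `-Π ∂₂ div u = 0`, and
`S : ∇∂₂u = ½ S : ∂₂S = ¼ ∂₂ ‖S‖²` by symmetry of `S`. This uses that the mixed second
derivatives of each component commute (`pd1_pd2_comm`) and that `div u = 0` may be
differentiated, as it holds on an open set.
-/

noncomputable section

/-- Partial derivative in the first coordinate direction. -/
def pd1 (g : ℝ × ℝ → ℝ) (x : ℝ × ℝ) : ℝ := fderiv ℝ g x (1, 0)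

/-- Partial derivative in the second coordinate direction. -/
def pd2 (g : ℝ × ℝ → ℝ) (x : ℝ × ℝ) : ℝ := fderiv ℝ g x (0, 1)

/-- If `g` is `C²` at `x`, the directional derivative `∂_v g` is differentiable there, and its
derivative is the second derivative of `g` with one slot frozen at `v`. -/
theorem hasFDerivAt_fderiv_apply {g : ℝ × ℝ → ℝ} {x : ℝ × ℝ} (hg : ContDiffAt ℝ 2 g x)
    (v : ℝ × ℝ) :
    HasFDerivAt (fun y => fderiv ℝ g y v)
      ((ContinuousLinearMap.apply ℝ ℝ v).comp (fderiv ℝ (fderiv ℝ g) x)) x := by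
  have hd : DifferentiableAt ℝ (fderiv ℝ g) x :=
    (hg.fderiv_right (m := 1) (by norm_num)).differentiableAt (by norm_num)
  exact (ContinuousLinearMap.apply ℝ ℝ v).hasFDerivAt.comp x hd.hasFDerivAt

theorem differentiableAt_pd1 {g : ℝ × ℝ → ℝ} {x : ℝ × ℝ} (hg : ContDiffAt ℝ 2 g x) :
    DifferentiableAt ℝ (pd1 g) x :=
  (hasFDerivAt_fderiv_apply hg (1, 0)).differentiableAt

theorem differentiableAt_pd2 {g : ℝ × ℝ → ℝ} {x : ℝ × ℝ} (hg : ContDiffAt ℝ 2 g x) :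
    DifferentiableAt ℝ (pd2 g) x :=
  (hasFDerivAt_fderiv_apply hg (0, 1)).differentiableAt

theorem pd1_pd2_comm {g : ℝ × ℝ → ℝ} {x : ℝ × ℝ} (hg : ContDiffAt ℝ 2 g x) :
    pd1 (pd2 g) x = pd2 (pd1 g) x := by
  have hs : IsSymmSndFDerivAt ℝ g x := hg.isSymmSndFDerivAt (by simp)
  have h1 : fderiv ℝ (pd1 g) x = _ := (hasFDerivAt_fderiv_apply hg (1, 0)).fderiv
  have h2 : fderiv ℝ (pd2 g) x = _ := (hasFDerivAt_fderiv_apply hg (0, 1)).fderiv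
  rw [pd1, h2, pd2, h1]
  exact hs (1, 0) (0, 1)

/-- Let `u = (u₁,u₂) ∈ C²(U,ℝ²)` and `Π ∈ C¹(U,ℝ)` satisfy `Δu = ∇Π` and `div u = 0`
on the open set `U ⊆ ℝ²`.  Then at every point of `U` one has
`∂₂(‖∇u + (∇u)ᵀ‖_F²) = 4 div(T₁(u,Π) ∂₂u)`, where `T₁(u,Π) = −Π E₂ + ∇u + (∇u)ᵀ`.
Here the Frobenius norm squared of `∇u + (∇u)ᵀ` is
`(2∂₁u₁)² + (∂₂u₁+∂₁u₂)² + (∂₁u₂+∂₂u₁)² + (2∂₂u₂)²`, and the vector field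
`T₁(u,Π) ∂₂u` has the components written out below. -/
theorem rellich_pointwise_identity_one
    (U : Set (ℝ × ℝ)) (hU : IsOpen U)
    (u : ℝ × ℝ → ℝ × ℝ) (Pr : ℝ × ℝ → ℝ)
    (hu : ContDiffOn ℝ 2 u U) (hPr : ContDiffOn ℝ 1 Pr U)
    (u1 u2 : ℝ × ℝ → ℝ)
    (hu1 : u1 = fun x => (u x).1) (hu2 : u2 = fun x => (u x).2)
    (hstokes1 : ∀ x ∈ U, pd1 (pd1 u1) x + pd2 (pd2 u1) x = pd1 Pr x)
    (hstokes2 : ∀ x ∈ U, pd1 (pd1 u2) x + pd2 (pd2 u2) x = pd2 Pr x)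
    (hdiv : ∀ x ∈ U, pd1 u1 x + pd2 u2 x = 0) :
    ∀ x ∈ U,
      pd2 (fun y => (2 * pd1 u1 y) ^ 2 + (pd2 u1 y + pd1 u2 y) ^ 2
          + (pd1 u2 y + pd2 u1 y) ^ 2 + (2 * pd2 u2 y) ^ 2) x
        = 4 * (pd1 (fun y => (-Pr y + 2 * pd1 u1 y) * pd2 u1 y
                  + (pd2 u1 y + pd1 u2 y) * pd2 u2 y) x
             + pd2 (fun y => (pd1 u2 y + pd2 u1 y) * pd2 u1 y
                  + (-Pr y + 2 * pd2 u2 y) * pd2 u2 y) x) := by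
  intro x hx
  have hUx : U ∈ nhds x := hU.mem_nhds hx
  have hux : ContDiffAt ℝ 2 u x := hu.contDiffAt hUx
  have hc1 : ContDiffAt ℝ 2 u1 x := by rw [hu1]; exact hux.fst
  have hc2 : ContDiffAt ℝ 2 u2 x := by rw [hu2]; exact hux.snd
  have hP : DifferentiableAt ℝ Pr x := (hPr.contDiffAt hUx).differentiableAt (by norm_num)
  have ha := differentiableAt_pd1 hc1
  have hb := differentiableAt_pd2 hc1
  have hc := differentiableAt_pd1 hc2
  have hd := differentiableAt_pd2 hc2
  have hm1 := pd1_pd2_comm hc1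
  have hm2 := pd1_pd2_comm hc2
  have hs1 := hstokes1 x hx
  have hs2 := hstokes2 x hx
  -- `div u` vanishes near `x`, hence so does its derivative at `x`.
  have hD : fderiv ℝ (pd1 u1) x + fderiv ℝ (pd2 u2) x = 0 := by
    have hev : (fun y => pd1 u1 y + pd2 u2 y) =ᶠ[nhds x] fun _ => (0 : ℝ) :=
      Filter.eventually_of_mem hUx hdiv
    rw [← fderiv_fun_add ha hd, hev.fderiv_eq, fderiv_fun_const, Pi.zero_apply]
  have hd1 : pd1 (pd1 u1) x + pd1 (pd2 u2) x = 0 := DFunLike.congr_fun hD (1, 0)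
  have hd2 : pd2 (pd1 u1) x + pd2 (pd2 u2) x = 0 := DFunLike.congr_fun hD (0, 1)
  have A := ha.hasFDerivAt
  have B := hb.hasFDerivAt
  have C := hc.hasFDerivAt
  have D := hd.hasFDerivAt
  have P := hP.hasFDerivAt
  have L := ((((A.const_mul 2).pow 2).add ((B.add C).pow 2)).add ((C.add B).pow 2)).add
    ((D.const_mul 2).pow 2)
  have R1 := ((P.neg.add (A.const_mul 2)).mul B).add ((B.add C).mul D)
  have R2 := ((C.add B).mul B).add ((P.neg.add (D.const_mul 2)).mul D)
  have EL := DFunLike.congr_fun L.fderiv (0, 1)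
  have ER1 := DFunLike.congr_fun R1.fderiv (1, 0)
  have ER2 := DFunLike.congr_fun R2.fderiv (0, 1)
  refine EL.trans (Eq.trans ?_ (congrArg (4 * ·) (congrArg₂ (· + ·) ER1 ER2)).symm)
  have e1 (g : ℝ × ℝ → ℝ) : fderiv ℝ g x (1, 0) = pd1 g x := rfl
  have e2 (g : ℝ × ℝ → ℝ) : fderiv ℝ g x (0, 1) = pd2 g x := rfl
  simp [e1, e2]
  -- The momentum and divergence terms multiply `∂₂u`; the `Pr` term is `Π ∂₂ div u`; the rest only
  -- exchanges mixed derivatives.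
  linear_combination (-4 * pd2 u1 x) * hs1 - 4 * pd2 u1 x * hd1 + 4 * pd2 u1 x * hm2
    - 4 * pd2 u2 x * (hs2 + hm1 + hd2) + 4 * Pr x * (hm1 + hd2) - 8 * pd1 u1 x * hm1
    - 4 * (pd2 u1 x + pd1 u2 x) * hm2
end
end

section
/- Let U ⊆ ℝ² be open, u ∈ C²(U, ℝ²) and Π ∈ C¹(U, ℝ) satisfy Δu = ∇Π and div u = 0 on U. Then at every point of U one has the pointwise identity ∂₂(Π²) = 2 div((∂₁u₂ − ∂₂u₁) ∂₁u + Π ∇u₂). -/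
/-!
The identity is a pointwise computation. Write `w = ∂₁u₂ − ∂₂u₁`. Differentiating `div u = 0` and
using the symmetry of second derivatives, the Stokes equation `Δu = ∇Π` becomes
`∂₁w = ∂₂Π` and `∂₂w = −∂₁Π`. Expanding the divergence by the product rule, the terms carrying `w` itself
combine to `w ∂₁(div u) = 0`, the terms carrying `∇w` or `∇Π` combine to
`∂₂Π (∂₁u₁ + ∂₂u₂) = 0`, and what is left is `Π Δu₂ = Π ∂₂Π`, half of `∂₂(Π²)`.
-/

noncomputable section

theorem differentiableAt_fderiv_apply_of_contDiffAt {g : ℝ × ℝ → ℝ} {x : ℝ × ℝ}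
    (hg : ContDiffAt ℝ 2 g x) (v : ℝ × ℝ) :
    DifferentiableAt ℝ (fun y => fderiv ℝ g y v) x := by
  have h : ContDiffAt ℝ 1 (fderiv ℝ g) x := hg.fderiv_right (by norm_num)
  exact (h.differentiableAt (by norm_num)).clm_apply (differentiableAt_const v)

/-- Product rule for the shape `(a − b) c + p d` of the components of the vector field, in an
arbitrary direction `v`. -/
theorem fderiv_sub_mul_add_mul {a b c p d : ℝ × ℝ → ℝ} {x : ℝ × ℝ}
    (ha : DifferentiableAt ℝ a x) (hb : DifferentiableAt ℝ b x) (hc : DifferentiableAt ℝ c x)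
    (hp : DifferentiableAt ℝ p x) (hd : DifferentiableAt ℝ d x) (v : ℝ × ℝ) :
    fderiv ℝ (fun y => (a y - b y) * c y + p y * d y) x v
      = (fderiv ℝ a x v - fderiv ℝ b x v) * c x + (a x - b x) * fderiv ℝ c x v
        + fderiv ℝ p x v * d x + p x * fderiv ℝ d x v := by
  have h := (((ha.hasFDerivAt.sub hb.hasFDerivAt).mul hc.hasFDerivAt).add
    (hp.hasFDerivAt.mul hd.hasFDerivAt)).fderiv
  have hv := congrArg (fun L => L v) h
  refine hv.trans ?_
  simp
  ring

/-- Let `u = (u₁,u₂) ∈ C²(U,ℝ²)` and `Π ∈ C¹(U,ℝ)` satisfy `Δu = ∇Π` and `div u = 0`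
on the open set `U ⊆ ℝ²`.  Then at every point of `U` one has
`∂₂(Π²) = 2 div((∂₁u₂ − ∂₂u₁) ∂₁u + Π ∇u₂)`, where the vector field
`(∂₁u₂ − ∂₂u₁) ∂₁u + Π ∇u₂` has the components written out below. -/
theorem rellich_pointwise_identity_three
    (U : Set (ℝ × ℝ)) (hU : IsOpen U)
    (u : ℝ × ℝ → ℝ × ℝ) (Pr : ℝ × ℝ → ℝ)
    (hu : ContDiffOn ℝ 2 u U) (hPr : ContDiffOn ℝ 1 Pr U)
    (u1 u2 : ℝ × ℝ → ℝ)
    (hu1 : u1 = fun x => (u x).1) (hu2 : u2 = fun x => (u x).2)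
    (hstokes1 : ∀ x ∈ U, pd1 (pd1 u1) x + pd2 (pd2 u1) x = pd1 Pr x)
    (hstokes2 : ∀ x ∈ U, pd1 (pd1 u2) x + pd2 (pd2 u2) x = pd2 Pr x)
    (hdiv : ∀ x ∈ U, pd1 u1 x + pd2 u2 x = 0) :
    ∀ x ∈ U,
      pd2 (fun y => (Pr y) ^ 2) x
        = 2 * (pd1 (fun y => (pd1 u2 y - pd2 u1 y) * pd1 u1 y + Pr y * pd1 u2 y) x
             + pd2 (fun y => (pd1 u2 y - pd2 u1 y) * pd1 u2 y + Pr y * pd2 u2 y) x) := by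
  intro x hx
  have hxU : U ∈ nhds x := hU.mem_nhds hx
  have hux : ContDiffAt ℝ 2 u x := hu.contDiffAt hxU
  have c1 : ContDiffAt ℝ 2 u1 x := by rw [hu1]; exact hux.fst
  have c2 : ContDiffAt ℝ 2 u2 x := by rw [hu2]; exact hux.snd
  have dP : DifferentiableAt ℝ Pr x := (hPr.contDiffAt hxU).differentiableAt (by norm_num)
  -- `div u` vanishes on a neighbourhood of `x`, so its directional derivatives vanish at `x`.
  have hdiv' (v : ℝ × ℝ) : fderiv ℝ (pd1 u1) x v + fderiv ℝ (pd2 u2) x v = 0 := by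
    have h0 : (pd1 u1 + pd2 u2) =ᶠ[nhds x] fun _ => (0 : ℝ) := by
      filter_upwards [hxU] with y hy using hdiv y hy
    have h1 := h0.fderiv_eq (𝕜 := ℝ)
    rw [fderiv_add (differentiableAt_pd1 c1) (differentiableAt_pd2 c2)] at h1
    simpa using congrArg (fun L => L v) h1
  have e1 : pd1 (pd1 u1) x + pd1 (pd2 u2) x = 0 := hdiv' (1, 0)
  have e2 : pd2 (pd1 u1) x + pd2 (pd2 u2) x = 0 := hdiv' (0, 1)
  have s1 := pd1_pd2_comm c1
  have s2 := pd1_pd2_comm c2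
  have A : pd1 (fun y => (pd1 u2 y - pd2 u1 y) * pd1 u1 y + Pr y * pd1 u2 y) x
      = (pd1 (pd1 u2) x - pd1 (pd2 u1) x) * pd1 u1 x + (pd1 u2 x - pd2 u1 x) * pd1 (pd1 u1) x
        + pd1 Pr x * pd1 u2 x + Pr x * pd1 (pd1 u2) x :=
    fderiv_sub_mul_add_mul (differentiableAt_pd1 c2) (differentiableAt_pd2 c1)
      (differentiableAt_pd1 c1) dP (differentiableAt_pd1 c2) (1, 0)
  have B : pd2 (fun y => (pd1 u2 y - pd2 u1 y) * pd1 u2 y + Pr y * pd2 u2 y) x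
      = (pd2 (pd1 u2) x - pd2 (pd2 u1) x) * pd1 u2 x + (pd1 u2 x - pd2 u1 x) * pd2 (pd1 u2) x
        + pd2 Pr x * pd2 u2 x + Pr x * pd2 (pd2 u2) x :=
    fderiv_sub_mul_add_mul (differentiableAt_pd1 c2) (differentiableAt_pd2 c1)
      (differentiableAt_pd1 c2) dP (differentiableAt_pd2 c2) (0, 1)
  have C : pd2 (fun y => (Pr y) ^ 2) x = 2 * Pr x * pd2 Pr x := by
    have h := congrArg (fun L => L ((0, 1) : ℝ × ℝ)) (dP.hasFDerivAt.pow 2).fderiv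
    refine h.trans ?_
    simp [pd2]
  -- The Stokes equation in terms of the vorticity `w`: `∂₁w = ∂₂Π` and `∂₂w = −∂₁Π`.
  have w1 : pd1 (pd1 u2) x - pd1 (pd2 u1) x = pd2 Pr x := by
    linarith [hstokes2 x hx]
  have w2 : pd2 (pd1 u2) x - pd2 (pd2 u1) x = -pd1 Pr x := by
    linarith [hstokes1 x hx]
  have e3 : pd1 (pd1 u1) x + pd2 (pd1 u2) x = 0 := by linarith
  rw [A, B, C, w1, w2]
  linear_combination (-2 * pd2 Pr x) * hdiv x hx - 2 * (pd1 u2 x - pd2 u1 x) * e3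
    - 2 * Pr x * hstokes2 x hx
end
end

section
/- Let D := {(ξ,ξ) : ξ ∈ ℝ} be the diagonal in ℝ². Let A ∈ C(ℝ²) ∩ C¹(ℝ²∖D), let u : ℝ → ℝ be continuous with compact support, and assume there exist constants C > 0 and α ∈ (0,1) such that |∂_ξ A(ξ,s)| ≤ C |ξ − s|^{−α} for all (ξ,s) ∈ ℝ²∖D. Then the function ψ : ℝ → ℝ defined by ψ(ξ) := ∫_ℝ A(ξ,s) u(s) ds belongs to C¹(ℝ) and ψ'(ξ) = ∫_ℝ ∂_ξ A(ξ,s) u(s) ds for every ξ ∈ ℝ. -/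
/-!
Write `B(ξ,s) = ∂_ξ A(ξ,s)` and `G(ξ) = ∫ B(ξ,s) u(s) ds`. The claim follows from two facts.

* `G` is continuous. After the substitution `s = ξ - t`, the singularity of
  `B(ξ,ξ-t) u(ξ-t)` sits at `t = 0` for every `ξ`, and near a given `ξ₀` the integrand is dominated
  by a multiple of `|t|^{-α}` on a fixed bounded interval, so dominated convergence applies
  (`continuous_kernelIntegral`).
* `ψ(b) - ψ(0) = ∫_0^b G`. For each `s` the fundamental theorem of calculus holds for the continuous
  function `A(·,s)`, which is differentiable except at `s` with integrable derivative; Fubini then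
  exchanges the two integrals. Absolute integrability on the product follows from the continuity of
  `ξ ↦ ∫ |B(ξ,s)| |u(s)| ds`, which is the first fact applied to `|B|` and `|u|`.

The fundamental theorem of calculus for the continuous function `G` then gives `ψ' = G`.
-/

noncomputable section

open MeasureTheory

lemma integrableOn_abs_rpow {α : ℝ} (hα : α < 1) (R : ℝ) :
    IntegrableOn (fun t : ℝ => |t| ^ (-α)) (Set.Icc (-R) R) := by
  rcases lt_or_ge R 0 with hR | hR
  · rw [Set.Icc_eq_empty (by linarith)]
    exact integrableOn_empty
  have h : ∀ x : ℝ, 0 < x → IntervalIntegrable (fun t : ℝ => |t| ^ (-α)) volume 0 x := by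
    intro x hx
    refine (intervalIntegral.intervalIntegrable_rpow' (r := -α) (a := 0) (b := x)
      (by linarith)).congr ?_
    intro t ht
    rw [Set.uIoc_of_le hx.le] at ht
    simp [abs_of_pos ht.1]
  have h2 : IntervalIntegrable (fun t : ℝ => |t| ^ (-α)) volume (-R) R :=
    intervalIntegrable_of_even (fun x => by simp) h
  exact (intervalIntegrable_iff_integrableOn_Icc_of_le (by linarith)).1 h2

/-- The domination shared by all integrals below: in the variable `t = ξ - s`, locally uniformly in
`ξ`, the integrand `F(ξ,s) u(s)` is bounded by one integrable function of `t`. -/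
lemma exists_dominating {F : ℝ × ℝ → ℝ} {u : ℝ → ℝ} (hu : Continuous u)
    (husupp : HasCompactSupport u) {C α : ℝ} (hα : α < 1)
    (hF : ∀ ξ s : ℝ, ξ ≠ s → |F (ξ, s)| ≤ C * |ξ - s| ^ (-α)) (ξ₀ : ℝ) :
    ∃ g : ℝ → ℝ, Integrable g ∧ ∀ ξ ∈ Metric.ball ξ₀ 1, ∀ t : ℝ, t ≠ 0 →
      ‖F (ξ, ξ - t) * u (ξ - t)‖ ≤ g t := by
  obtain ⟨M, hM⟩ := hu.bounded_above_of_compact_support husupp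
  obtain ⟨r, hr⟩ := husupp.isCompact.isBounded.subset_closedBall 0
  refine ⟨(Set.Icc (-(|ξ₀| + 1 + r)) (|ξ₀| + 1 + r)).indicator fun t => C * |t| ^ (-α) * M,
    ?_, ?_⟩
  · rw [integrable_indicator_iff measurableSet_Icc]
    exact ((integrableOn_abs_rpow hα _).const_mul C).mul_const M
  · intro ξ hξ t ht
    have hb : |F (ξ, ξ - t)| ≤ C * |t| ^ (-α) := by
      have := hF ξ (ξ - t) (by intro h; apply ht; linarith)
      simpa using this
    have hbu : ‖F (ξ, ξ - t) * u (ξ - t)‖ ≤ C * |t| ^ (-α) * M := by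
      rw [norm_mul]
      exact mul_le_mul hb (hM _) (norm_nonneg _) ((abs_nonneg _).trans hb)
    by_cases hut : u (ξ - t) = 0
    · rw [hut, mul_zero, norm_zero]
      exact Set.indicator_apply_nonneg fun _ => (norm_nonneg _).trans hbu
    · rw [Set.indicator_of_mem]
      · exact hbu
      · have h1 : ξ - t ∈ Metric.closedBall (0 : ℝ) r := hr (subset_tsupport u hut)
        rw [mem_closedBall_zero_iff, Real.norm_eq_abs] at h1
        rw [Metric.mem_ball, Real.dist_eq] at hξ
        rw [abs_le] at h1
        rw [abs_lt] at hξ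
        have := le_abs_self ξ₀
        have := neg_abs_le ξ₀
        constructor <;> linarith [h1.1, h1.2, hξ.1, hξ.2]

lemma integrable_kernel {F : ℝ × ℝ → ℝ} (hFm : Measurable F) {u : ℝ → ℝ} (hu : Continuous u)
    (husupp : HasCompactSupport u) {C α : ℝ} (hα : α < 1)
    (hF : ∀ ξ s : ℝ, ξ ≠ s → |F (ξ, s)| ≤ C * |ξ - s| ^ (-α)) (ξ : ℝ) :
    Integrable fun s => F (ξ, s) * u s := by
  obtain ⟨g, hg, hdom⟩ := exists_dominating hu husupp hα hF ξ
  have h : Integrable fun t => F (ξ, ξ - t) * u (ξ - t) := by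
    refine hg.mono' ?_ ?_
    · have := hu.measurable
      exact Measurable.aestronglyMeasurable (by fun_prop)
    · filter_upwards [Measure.ae_ne volume (0 : ℝ)] with t ht
      exact hdom ξ (Metric.mem_ball_self one_pos) t ht
  simpa using h.comp_sub_left ξ

lemma continuous_kernelIntegral {F : ℝ × ℝ → ℝ} (hFm : Measurable F)
    (hFc : ContinuousOn F {p : ℝ × ℝ | p.1 ≠ p.2}) {u : ℝ → ℝ} (hu : Continuous u)
    (husupp : HasCompactSupport u) {C α : ℝ} (hα : α < 1)
    (hF : ∀ ξ s : ℝ, ξ ≠ s → |F (ξ, s)| ≤ C * |ξ - s| ^ (-α)) :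
    Continuous fun ξ => ∫ s, F (ξ, s) * u s := by
  have hshift : (fun ξ => ∫ s, F (ξ, s) * u s) = fun ξ => ∫ t, F (ξ, ξ - t) * u (ξ - t) := by
    funext ξ
    exact (integral_sub_left_eq_self (fun s => F (ξ, s) * u s) volume ξ).symm
  rw [hshift, continuous_iff_continuousAt]
  intro ξ₀
  obtain ⟨g, hg, hdom⟩ := exists_dominating hu husupp hα hF ξ₀
  refine continuousAt_of_dominated (bound := g) ?_ ?_ hg ?_
  · refine Filter.Eventually.of_forall fun ξ => ?_
    have := hu.measurable
    exact Measurable.aestronglyMeasurable (by fun_prop)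
  · filter_upwards [Metric.ball_mem_nhds ξ₀ one_pos] with ξ hξ
    filter_upwards [Measure.ae_ne volume (0 : ℝ)] with t ht
    exact hdom ξ hξ t ht
  · filter_upwards [Measure.ae_ne volume (0 : ℝ)] with t ht
    have hc : Continuous fun ξ : ℝ => F (ξ, ξ - t) := by
      refine hFc.comp_continuous (f := fun ξ : ℝ => (ξ, ξ - t)) (by fun_prop) fun ξ => ?_
      exact fun h : ξ = ξ - t => ht (by linarith)
    exact (hc.mul (by fun_prop)).continuousAt

lemma isOpen_offDiagonal : IsOpen {p : ℝ × ℝ | p.1 ≠ p.2} :=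
  isOpen_ne_fun continuous_fst continuous_snd

lemma hasDerivAt_kernel {A : ℝ × ℝ → ℝ} (hA1 : ContDiffOn ℝ 1 A {p : ℝ × ℝ | p.1 ≠ p.2})
    {ξ s : ℝ} (h : ξ ≠ s) :
    HasDerivAt (fun t => A (t, s)) (fderiv ℝ A (ξ, s) (1, 0)) ξ := by
  have hd : DifferentiableAt ℝ A (ξ, s) :=
    (hA1.differentiableOn one_ne_zero).differentiableAt (isOpen_offDiagonal.mem_nhds h)
  exact hd.hasFDerivAt.comp_hasDerivAt ξ ((hasDerivAt_id ξ).prodMk (hasDerivAt_const ξ s))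

/-- Differentiation under the integral sign for a kernel that is continuous on `ℝ²`,
continuously differentiable off the diagonal `D = {(ξ,ξ)}`, and whose partial
derivative `∂_ξ A(ξ,s)` is dominated by `C|ξ − s|^{−α}` with `α ∈ (0,1)`:
for continuous compactly supported `u`, the function `ψ(ξ) = ∫_ℝ A(ξ,s) u(s) ds`
is `C¹` on `ℝ` with `ψ'(ξ) = ∫_ℝ ∂_ξ A(ξ,s) u(s) ds`. -/
theorem diff_under_integral_kernel
    (A : ℝ × ℝ → ℝ) (hA : Continuous A)
    (hA1 : ContDiffOn ℝ 1 A {p : ℝ × ℝ | p.1 ≠ p.2})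
    (u : ℝ → ℝ) (hu : Continuous u) (husupp : HasCompactSupport u)
    (C α : ℝ) (hC : 0 < C) (hα : α ∈ Set.Ioo (0 : ℝ) 1)
    (hbound : ∀ ξ s : ℝ, ξ ≠ s →
      |deriv (fun t => A (t, s)) ξ| ≤ C * |ξ - s| ^ (-α))
    (ψ : ℝ → ℝ) (hψ : ψ = fun ξ => ∫ s, A (ξ, s) * u s) :
    ContDiff ℝ 1 ψ ∧
    ∀ ξ, deriv ψ ξ = ∫ s, deriv (fun t => A (t, s)) ξ * u s := by
  set B : ℝ × ℝ → ℝ := fun p => deriv (fun t => A (t, p.2)) p.1 with hB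
  have hBm : Measurable B := by
    have h := measurable_deriv_with_param (𝕜 := ℝ) (f := fun s t : ℝ => A (t, s))
      (hA.comp continuous_swap)
    exact h.comp measurable_swap
  have hBc : ContinuousOn B {p : ℝ × ℝ | p.1 ≠ p.2} := by
    have h := hA1.continuousOn_fderiv_of_isOpen isOpen_offDiagonal le_rfl
    refine (h.clm_apply (continuousOn_const (c := ((1, 0) : ℝ × ℝ)))).congr ?_
    rintro ⟨ξ, s⟩ hp
    exact (hasDerivAt_kernel hA1 hp).deriv
  have hBb : ∀ ξ s : ℝ, ξ ≠ s → |B (ξ, s)| ≤ C * |ξ - s| ^ (-α) := hbound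
  have hGc : Continuous fun ξ => ∫ s, B (ξ, s) * u s :=
    continuous_kernelIntegral hBm hBc hu husupp hα.2 hBb
  have hGabs : Continuous fun ξ => ∫ s, |B (ξ, s)| * |u s| :=
    continuous_kernelIntegral (F := fun p => |B p|) (u := fun s => |u s|)
      (measurable_abs.comp hBm) hBc.abs hu.abs
      (husupp.comp_left abs_zero) hα.2 (by simpa using hBb)
  have hBs : ∀ s a b : ℝ, IntervalIntegrable (fun ξ => B (ξ, s)) volume a b := by
    intro s a b
    have h : IntervalIntegrable (fun ξ => C * |ξ - s| ^ (-α)) volume a b := by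
      have h1 : IntervalIntegrable (fun t : ℝ => |t| ^ (-α)) volume (a - s) (b - s) := by
        obtain ⟨r, hr⟩ := (isCompact_uIcc (a := a - s) (b := b - s)).isBounded.subset_closedBall 0
        rw [Real.closedBall_eq_Icc, zero_sub, zero_add] at hr
        exact ((integrableOn_abs_rpow hα.2 r).mono_set hr).intervalIntegrable
      simpa using (h1.comp_sub_right s).const_mul C
    refine h.mono_fun' ?_ ?_
    · exact Measurable.aestronglyMeasurable (by fun_prop)
    · filter_upwards [ae_restrict_of_ae (Measure.ae_ne volume s)] with ξ hξ
      exact hBb ξ s hξ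
  have hftc : ∀ s b : ℝ, ∫ ξ in (0 : ℝ)..b, B (ξ, s) = A (b, s) - A (0, s) := by
    intro s b
    refine integral_eq_of_hasDerivAt_off_countable (fun t => A (t, s)) (fun ξ => B (ξ, s))
      (Set.countable_singleton s) (by fun_prop) ?_ (hBs s 0 b)
    rintro ξ ⟨-, hξ⟩
    exact (hasDerivAt_kernel hA1 hξ).differentiableAt.hasDerivAt
  have hAint : ∀ ξ, Integrable fun s => A (ξ, s) * u s := fun ξ =>
    Continuous.integrable_of_hasCompactSupport (by fun_prop) husupp.mul_left
  have hprod : ∀ b : ℝ, Integrable (Function.uncurry fun ξ s => B (ξ, s) * u s)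
      ((volume.restrict (Set.uIoc 0 b)).prod volume) := by
    intro b
    have hm : Measurable (Function.uncurry fun ξ s => B (ξ, s) * u s) := by
      have := hu.measurable
      exact hBm.mul (this.comp measurable_snd)
    rw [integrable_prod_iff hm.aestronglyMeasurable]
    constructor
    · exact Filter.Eventually.of_forall fun ξ => integrable_kernel hBm hu husupp hα.2 hBb ξ
    · simp only [Function.uncurry, norm_mul, Real.norm_eq_abs]
      exact intervalIntegrable_iff.1 (hGabs.intervalIntegrable 0 b)
  have hψint : ∀ b, ψ b = ψ 0 + ∫ ξ in (0 : ℝ)..b, ∫ s, B (ξ, s) * u s := by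
    intro b
    rw [intervalIntegral_integral_swap (hprod b)]
    simp_rw [intervalIntegral.integral_mul_const, hftc, sub_mul]
    rw [integral_sub (hAint b) (hAint 0), hψ]
    ring
  have hderiv : ∀ ξ, HasDerivAt ψ (∫ s, B (ξ, s) * u s) ξ := by
    intro ξ
    rw [funext hψint]
    exact (hGc.integral_hasStrictDerivAt 0 ξ).hasDerivAt.const_add _
  refine ⟨?_, fun ξ => (hderiv ξ).deriv⟩
  rw [contDiff_one_iff_deriv]
  refine ⟨fun ξ => (hderiv ξ).differentiableAt, ?_⟩
  rw [funext fun ξ => (hderiv ξ).deriv]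
  exact hGc
end
end

section
/- Let f : ℝ → ℝ be differentiable with derivative f' that is α-Hölder continuous for some α ∈ (0,1), with Hölder seminorm H := sup_{x≠y} |f'(x) − f'(y)|/|x − y|^α < ∞. Then for all ξ, s ∈ ℝ with ξ ≠ s the kernel K satisfies ‖K(ξ,s)‖_F ≤ H |ξ − s|^{α − 1}, where ‖·‖_F is the Frobenius norm. -/
/-!
Write `r₁ = ξ - s`, `r₂ = f ξ - f s`. The matrix in `K` is the rank-one matrix `r rᵀ`, whose
Frobenius norm is `|r|²`, so `‖K‖_F = |r₁ f'(s) - r₂| / |r|² ≤ |r₁ f'(s) - r₂| / r₁²`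
(`frobNorm_Kmat`). By the mean value theorem `r₂ = f'(c) r₁` with `c` strictly between `ξ` and `s`
(`exists_deriv_eq_between`), so the numerator is `|r₁| |f'(s) - f'(c)| ≤ |r₁| H |r₁|^α`
by Hölder continuity.
-/

noncomputable section

open Matrix

/-- The 2×2 matrix kernel `K(ξ,s) = ((r₁ f'(s) − r₂)/|r|⁴) [[r₁², r₁r₂],[r₁r₂, r₂²]]`,
where `r = (ξ − s, f(ξ) − f(s))`. -/
def Kmat (f : ℝ → ℝ) (ξ s : ℝ) : Matrix (Fin 2) (Fin 2) ℝ :=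
  (((ξ - s) * deriv f s - (f ξ - f s)) / ((ξ - s) ^ 2 + (f ξ - f s) ^ 2) ^ 2) •
    !![(ξ - s) ^ 2, (ξ - s) * (f ξ - f s); (ξ - s) * (f ξ - f s), (f ξ - f s) ^ 2]

/-- The Frobenius norm of a real 2×2 matrix. -/
def frobNorm (M : Matrix (Fin 2) (Fin 2) ℝ) : ℝ :=
  Real.sqrt (∑ i : Fin 2, ∑ j : Fin 2, (M i j) ^ 2)

/-- The mean value theorem without an ordering of the two endpoints. -/
lemma exists_deriv_eq_between {f : ℝ → ℝ} (hf : Differentiable ℝ f) {ξ s : ℝ} (h : ξ ≠ s) :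
    ∃ c, s ≠ c ∧ |s - c| ≤ |ξ - s| ∧ f ξ - f s = deriv f c * (ξ - s) := by
  rcases lt_or_gt_of_ne h with h | h
  · obtain ⟨c, ⟨h1, h2⟩, hc⟩ :=
      exists_deriv_eq_slope f h hf.continuous.continuousOn hf.differentiableOn
    have : s - ξ ≠ 0 := (sub_pos.2 h).ne'
    rw [eq_div_iff this] at hc
    refine ⟨c, h2.ne', ?_, by linarith⟩
    rw [abs_of_pos (by linarith), abs_of_neg (by linarith)]
    linarith
  · obtain ⟨c, ⟨h1, h2⟩, hc⟩ :=
      exists_deriv_eq_slope f h hf.continuous.continuousOn hf.differentiableOn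
    rw [eq_div_iff (sub_pos.2 h).ne'] at hc
    refine ⟨c, h1.ne, ?_, by linarith⟩
    rw [abs_of_neg (by linarith), abs_of_pos (by linarith)]
    linarith

lemma frobNorm_Kmat (f : ℝ → ℝ) {ξ s : ℝ} (h : ξ ≠ s) :
    frobNorm (Kmat f ξ s) =
      |(ξ - s) * deriv f s - (f ξ - f s)| / ((ξ - s) ^ 2 + (f ξ - f s) ^ 2) := by
  have ha : 0 < (ξ - s) ^ 2 + (f ξ - f s) ^ 2 := by
    have := sub_ne_zero.2 h
    positivity
  unfold frobNorm Kmat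
  simp only [Fin.sum_univ_two, Matrix.smul_apply, Matrix.of_apply, Matrix.cons_val_zero,
    Matrix.cons_val_one, Matrix.cons_val', Matrix.cons_val_fin_one, smul_eq_mul]
  generalize ξ - s = a at *
  generalize f ξ - f s = b at *
  have hR : |a * deriv f s - b| / (a ^ 2 + b ^ 2)
      = √(((a * deriv f s - b) / (a ^ 2 + b ^ 2)) ^ 2) := by
    rw [Real.sqrt_sq_eq_abs, abs_div, abs_of_pos ha]
  rw [hR]
  congr 1
  field_simp

/-- If `f` is differentiable with `f'` α-Hölder continuous with Hölder seminorm `H`,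
then for `ξ ≠ s` one has `‖K(ξ,s)‖_F ≤ H |ξ − s|^{α−1}`. -/
theorem kernel_frobenius_estimate
    (f : ℝ → ℝ) (hf : Differentiable ℝ f)
    (α : ℝ) (hα : α ∈ Set.Ioo (0 : ℝ) 1) (H : ℝ)
    (hHolder : ∀ x y : ℝ, x ≠ y → |deriv f x - deriv f y| ≤ H * |x - y| ^ α) :
    ∀ ξ s : ℝ, ξ ≠ s → frobNorm (Kmat f ξ s) ≤ H * |ξ - s| ^ (α - 1) := by
  intro ξ s h
  have ha : 0 < |ξ - s| := abs_pos.2 (sub_ne_zero.2 h)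
  obtain ⟨c, hsc, hc, hmv⟩ := exists_deriv_eq_between hf h
  have hd := hHolder s c hsc
  -- The Hölder bound itself forces `0 ≤ H`, needed to enlarge `|s - c|` to `|ξ - s|`.
  have hH : 0 ≤ H :=
    nonneg_of_mul_nonneg_left ((abs_nonneg _).trans hd)
      (Real.rpow_pos_of_pos (abs_pos.2 (sub_ne_zero.2 hsc)) α)
  have hd' : |deriv f s - deriv f c| ≤ H * |ξ - s| ^ α :=
    hd.trans (mul_le_mul_of_nonneg_left
      (Real.rpow_le_rpow (abs_nonneg _) hc hα.1.le) hH)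
  rw [frobNorm_Kmat f h, Real.rpow_sub_one ha.ne']
  calc |(ξ - s) * deriv f s - (f ξ - f s)| / ((ξ - s) ^ 2 + (f ξ - f s) ^ 2)
      ≤ |(ξ - s) * deriv f s - (f ξ - f s)| / |ξ - s| ^ 2 := by
        gcongr
        rw [sq_abs]
        linarith [sq_nonneg (f ξ - f s)]
    _ = |deriv f s - deriv f c| / |ξ - s| := by
        rw [hmv, show (ξ - s) * deriv f s - deriv f c * (ξ - s)
          = (ξ - s) * (deriv f s - deriv f c) by ring, abs_mul]
        field_simp
    _ ≤ H * |ξ - s| ^ α / |ξ - s| := by gcongr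
    _ = H * (|ξ - s| ^ α / |ξ - s|) := mul_div_assoc _ _ _
end
end

section
/- Let f ∈ C¹(ℝ) with f' bounded and α-Hölder continuous for some α ∈ (0,1), and let β ∈ C¹(ℝ, ℝ²) have compact support. Then for every ξ ∈ ℝ the integral ∫_ℝ K(ξ,s) β(s) ds converges absolutely and the integration-by-parts formula ∫_ℝ K(ξ,s) β(s) ds = ∫_ℝ G(S(ξ,s)) β'(s) ds holds. -/
/-!
Off the diagonal, with `r₂ = S r₁`, the kernel is
`K(ξ,s) = (f'(s) − S)/(ξ − s) · (1 + S²)⁻² [[1, S], [S, S²]]`, and `∂ₛ S = (S − f'(s))/(ξ − s)`,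
so `∂ₛ G(S(ξ,s)) = −K(ξ,s)` for `s ≠ ξ`.

By the mean value theorem `S(ξ,s) = f'(c)` with `c` between `ξ` and `s`, so the Hölder bound gives
`|K(ξ,s)| ≤ H |ξ − s|^(α − 1)` entrywise, which is locally integrable; this is absolute convergence.
The function `s ↦ G(S(ξ,s)) β(s)` is continuous, compactly supported, and differentiable off the
single point `ξ` with integrable derivative `−K β + G(S) β'`.  The fundamental theorem of calculus
with a countable exceptional set shows that this derivative has integral zero, which is the formula.

The argument is carried out for scalar entries in `scalar_integration_by_parts`; the theorem follows
by summing over the entries of each row.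
-/

noncomputable section

open Matrix MeasureTheory

attribute [local instance] Matrix.normedAddCommGroup Matrix.normedSpace

/-- The difference quotient `S(ξ,s) = (f(ξ) − f(s))/(ξ − s)` for `ξ ≠ s`,
extended by `S(ξ,ξ) = f'(ξ)` on the diagonal. -/
def Sdq (f : ℝ → ℝ) (ξ s : ℝ) : ℝ :=
  if ξ = s then deriv f ξ else (f ξ - f s) / (ξ - s)

lemma continuous_Sdq {f : ℝ → ℝ} (hf : ContDiff ℝ 1 f) (ξ : ℝ) : Continuous (Sdq f ξ) := by
  have hS : Sdq f ξ = dslope f ξ := by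
    funext s
    by_cases h : ξ = s
    · subst h; simp [Sdq, dslope_same]
    · rw [dslope_of_ne _ (Ne.symm h), slope_def_field, Sdq, if_neg h, ← neg_sub (f s), ← neg_sub s,
        neg_div_neg_eq]
  rw [hS, continuous_iff_continuousAt]
  intro s
  by_cases h : s = ξ
  · subst h
    exact continuousAt_dslope_same.2 (hf.differentiable one_ne_zero s)
  · exact (continuousAt_dslope_of_ne h).2 hf.continuous.continuousAt

lemma hasDerivAt_Sdq {f : ℝ → ℝ} (hf : ContDiff ℝ 1 f) {ξ s : ℝ} (h : s ≠ ξ) :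
    HasDerivAt (Sdq f ξ) (-((deriv f s - Sdq f ξ s) / (ξ - s))) s := by
  have hne : ξ - s ≠ 0 := sub_ne_zero.2 (Ne.symm h)
  have hd := (hf.differentiable one_ne_zero s).hasDerivAt
  have h1 := (hd.const_sub (f ξ)).div ((hasDerivAt_id s).const_sub ξ) hne
  have h2 : Sdq f ξ =ᶠ[nhds s] fun s => (f ξ - f s) / (ξ - s) := by
    filter_upwards [isOpen_ne.mem_nhds h] with x hx
    rw [Sdq, if_neg (Ne.symm hx)]
  refine (h1.congr_of_eventuallyEq h2).congr_deriv ?_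
  rw [Sdq, if_neg (Ne.symm h)]
  simp only [id]
  field_simp
  ring

/-- The Hölder bound on `f'` controls the numerator of the kernel, since `S(ξ,s)` is a value of
`f'` between `ξ` and `s`. -/
lemma abs_deriv_sub_Sdq_le {f : ℝ → ℝ} (hf : ContDiff ℝ 1 f) {α H : ℝ} (hα : 0 < α)
    (hHolder : ∀ x y : ℝ, x ≠ y → |deriv f x - deriv f y| ≤ H * |x - y| ^ α)
    {ξ s : ℝ} (h : s ≠ ξ) :
    |deriv f s - Sdq f ξ s| ≤ H * |ξ - s| ^ α := by
  have hH : 0 ≤ H := by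
    have := hHolder 0 1 (by norm_num)
    simp only [zero_sub, abs_neg, abs_one, Real.one_rpow, mul_one] at this
    exact (abs_nonneg _).trans this
  have hdiff := hf.differentiable one_ne_zero
  obtain ⟨c, hcs, hcl, hc⟩ : ∃ c, s ≠ c ∧ |s - c| ≤ |ξ - s| ∧ deriv f c = Sdq f ξ s := by
    rcases lt_or_gt_of_ne h with hlt | hlt
    · obtain ⟨c, ⟨h1, h2⟩, hc⟩ := exists_deriv_eq_slope f hlt hf.continuous.continuousOn
        hdiff.differentiableOn
      refine ⟨c, h1.ne, ?_, ?_⟩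
      · rw [abs_of_neg (by linarith), abs_of_pos (by linarith)]; linarith
      · rw [hc, Sdq, if_neg (Ne.symm h)]
    · obtain ⟨c, ⟨h1, h2⟩, hc⟩ := exists_deriv_eq_slope f hlt hf.continuous.continuousOn
        hdiff.differentiableOn
      refine ⟨c, h2.ne', ?_, ?_⟩
      · rw [abs_of_pos (by linarith), abs_of_neg (by linarith)]; linarith
      · rw [hc, Sdq, if_neg (Ne.symm h), ← neg_sub (f ξ), ← neg_sub ξ, neg_div_neg_eq]
  rw [← hc]
  exact (hHolder s c hcs).trans (by gcongr)

/-- The integration-by-parts formula for one entry `g` of `G`, with `g' = (1 + t²)⁻² p(t)`, and one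
component `b` of `β`; `k` is the corresponding entry of the kernel. -/
lemma scalar_integration_by_parts {f : ℝ → ℝ} (hf : ContDiff ℝ 1 f) {α H : ℝ} (hα : 0 < α)
    (hHolder : ∀ x y : ℝ, x ≠ y → |deriv f x - deriv f y| ≤ H * |x - y| ^ α)
    {g p : ℝ → ℝ} (hp : ∀ t, |p t| ≤ 1 + t ^ 2)
    (hg : ∀ t, HasDerivAt g (((1 + t ^ 2) ^ 2)⁻¹ * p t) t)
    {b : ℝ → ℝ} (hb : ContDiff ℝ 1 b) (hbs : HasCompactSupport b)
    {k : ℝ → ℝ} {ξ : ℝ} (hkm : Measurable k)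
    (hk : ∀ s, s ≠ ξ → k s = (deriv f s - Sdq f ξ s) / (ξ - s) *
      (((1 + Sdq f ξ s ^ 2) ^ 2)⁻¹ * p (Sdq f ξ s))) :
    Integrable (fun s => k s * b s) ∧
    Integrable (fun s => g (Sdq f ξ s) * deriv b s) ∧
    ∫ s, k s * b s = ∫ s, g (Sdq f ξ s) * deriv b s := by
  have hgc : Continuous g := continuous_iff_continuousAt.2 fun t => (hg t).continuousAt
  have hgS : Continuous fun s => g (Sdq f ξ s) := hgc.comp (continuous_Sdq hf ξ)
  have hbound : ∀ s, s ≠ ξ → |k s| ≤ H * |ξ - s| ^ (-(1 - α)) := by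
    intro s hs
    have hpos : 0 < |ξ - s| := abs_pos.2 (sub_ne_zero.2 (Ne.symm hs))
    have h1 := abs_deriv_sub_Sdq_le hf hα hHolder hs
    have h2 : |((1 + Sdq f ξ s ^ 2) ^ 2)⁻¹ * p (Sdq f ξ s)| ≤ 1 := by
      have hq : 1 ≤ 1 + Sdq f ξ s ^ 2 := by nlinarith [sq_nonneg (Sdq f ξ s)]
      rw [abs_mul, abs_of_nonneg (by positivity), inv_mul_le_iff₀ (by positivity)]
      nlinarith [hp (Sdq f ξ s)]
    have h0 := (abs_nonneg _).trans h1
    rw [hk s hs, abs_mul, abs_div]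
    calc _ ≤ (H * |ξ - s| ^ α) / |ξ - s| * 1 := by gcongr
      _ = H * |ξ - s| ^ (-(1 - α)) := by
        rw [show -(1 - α) = α - 1 by ring, Real.rpow_sub_one hpos.ne']; ring
  have hint1 : Integrable (fun s => k s * b s) := by
    -- Translate the singularity to the origin.
    have hloc : LocallyIntegrable (fun y => k (ξ - y)) volume := by
      refine locallyIntegrable_of_norm_le_rpow (C := H) (α := 1 - α) (by simp) (by simpa using hα)
        ?_ (hkm.comp (by fun_prop)).aestronglyMeasurable
      have hae : ∀ᵐ y : ℝ, y ≠ 0 := by simp [ae_iff]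
      filter_upwards [hae] with y hy
      simpa using hbound (ξ - y) (by simpa using hy)
    have hcs : HasCompactSupport fun y => b (ξ - y) :=
      hbs.comp_homeomorph (Homeomorph.subLeft ξ)
    have := hloc.integrable_smul_left_of_hasCompactSupport
      (hb.continuous.comp (continuous_const.sub continuous_id)) hcs
    refine (integrable_comp_sub_left (fun s => k s * b s) ξ).1 (this.congr ?_)
    exact Filter.Eventually.of_forall fun y => mul_comm _ _
  have hint2 : Integrable (fun s => g (Sdq f ξ s) * deriv b s) :=
    (hgS.mul (hb.continuous_deriv le_rfl)).integrable_of_hasCompactSupport hbs.deriv.mul_left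
  refine ⟨hint1, hint2, ?_⟩
  obtain ⟨R, hRpos, hR⟩ := hbs.isCompact.isBounded.exists_pos_norm_lt
  have hb0 : ∀ s, R ≤ |s| → b s = 0 := fun s hs =>
    image_eq_zero_of_notMem_tsupport fun h => absurd (hR s h) (not_lt.2 hs)
  have hd0 : ∀ s, R ≤ |s| → deriv b s = 0 := fun s hs =>
    image_eq_zero_of_notMem_tsupport fun h =>
      absurd (hR s (tsupport_deriv_subset (𝕜 := ℝ) h)) (not_lt.2 hs)
  have hint : Integrable fun s => g (Sdq f ξ s) * deriv b s - k s * b s := hint2.sub hint1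
  have hFTC := integral_eq_of_hasDerivAt_off_countable_of_le (fun s => g (Sdq f ξ s) * b s)
    (fun s => g (Sdq f ξ s) * deriv b s - k s * b s) (a := -R) (b := R) (by linarith)
    (Set.countable_singleton ξ) (hgS.mul hb.continuous).continuousOn
    (fun s hs => by
      have hne : s ≠ ξ := hs.2
      refine (((hg _).comp s (hasDerivAt_Sdq hf hne)).mul
        (hb.differentiable one_ne_zero s).hasDerivAt).congr_deriv ?_
      rw [hk s hne]
      simp only [Function.comp]
      ring) hint.intervalIntegrable
  rw [hb0 R (le_abs_self R), hb0 (-R) (by simp [le_abs_self]),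
    intervalIntegral.integral_eq_integral_of_support_subset, integral_sub hint2 hint1] at hFTC
  · linarith
  · intro s hs
    by_contra hmem
    have hle : R ≤ |s| := by
      by_contra hlt
      exact hmem ⟨(abs_lt.1 (not_le.1 hlt)).1, (abs_lt.1 (not_le.1 hlt)).2.le⟩
    exact hs (by simp [hb0 s hle, hd0 s hle])

lemma Kmat_apply_of_ne (f : ℝ → ℝ) {ξ s : ℝ} (h : s ≠ ξ) (i j : Fin 2) :
    Kmat f ξ s i j = (deriv f s - Sdq f ξ s) / (ξ - s) * (((1 + Sdq f ξ s ^ 2) ^ 2)⁻¹ *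
      !![(1 : ℝ), Sdq f ξ s; Sdq f ξ s, Sdq f ξ s ^ 2] i j) := by
  have hne : ξ - s ≠ 0 := sub_ne_zero.2 (Ne.symm h)
  have hS : f ξ - f s = (ξ - s) * Sdq f ξ s := by
    rw [Sdq, if_neg (Ne.symm h)]; field_simp
  have hq : 1 + Sdq f ξ s ^ 2 ≠ 0 := by positivity
  rw [Kmat, hS]
  generalize Sdq f ξ s = S at *
  generalize ξ - s = r at *
  have hden : r ^ 2 + (r * S) ^ 2 = r ^ 2 * (1 + S ^ 2) := by ring
  rw [hden]
  fin_cases i <;> fin_cases j <;> simp <;> field_simp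

lemma measurable_Kmat_apply {f : ℝ → ℝ} (hf : ContDiff ℝ 1 f) (ξ : ℝ) (i j : Fin 2) :
    Measurable fun s => Kmat f ξ s i j := by
  have h1 : Measurable f := hf.continuous.measurable
  have h2 : Measurable (deriv f) := measurable_deriv f
  fin_cases i <;> fin_cases j <;> simp [Kmat] <;> fun_prop

/-- Let `f ∈ C¹(ℝ)` with `f'` bounded and α-Hölder continuous, `α ∈ (0,1)`, let
`G` be a primitive of `t ↦ (1+t²)⁻² [[1,t],[t,t²]]`, and let `β ∈ C¹(ℝ,ℝ²)` have
compact support.  Then for every `ξ` the integral `∫ K(ξ,s) β(s) ds` converges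
absolutely and `∫ K(ξ,s) β(s) ds = ∫ G(S(ξ,s)) β'(s) ds`. -/
theorem kernel_integration_by_parts
    (f : ℝ → ℝ) (hf : ContDiff ℝ 1 f)
    (hf' : ∃ M, ∀ x, |deriv f x| ≤ M)
    (α : ℝ) (hα : α ∈ Set.Ioo (0 : ℝ) 1) (H : ℝ)
    (hHolder : ∀ x y : ℝ, x ≠ y → |deriv f x - deriv f y| ≤ H * |x - y| ^ α)
    (G : ℝ → Matrix (Fin 2) (Fin 2) ℝ)
    (hG : ∀ t : ℝ, HasDerivAt G ((((1 + t ^ 2) ^ 2)⁻¹) • !![(1 : ℝ), t; t, t ^ 2]) t)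
    (β : ℝ → Fin 2 → ℝ) (hβ : ContDiff ℝ 1 β) (hβs : HasCompactSupport β) :
    ∀ ξ : ℝ,
      Integrable (fun s => Kmat f ξ s *ᵥ β s) ∧
      Integrable (fun s => G (Sdq f ξ s) *ᵥ deriv β s) ∧
      ∫ s, Kmat f ξ s *ᵥ β s = ∫ s, G (Sdq f ξ s) *ᵥ deriv β s := by
  intro ξ
  have key : ∀ i j : Fin 2,
      Integrable (fun s => Kmat f ξ s i j * β s j) ∧
      Integrable (fun s => G (Sdq f ξ s) i j * deriv β s j) ∧
      ∫ s, Kmat f ξ s i j * β s j = ∫ s, G (Sdq f ξ s) i j * deriv β s j := by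
    intro i j
    have hbj : ContDiff ℝ 1 fun s => β s j := contDiff_pi.1 hβ j
    have hd : ∀ s, deriv β s j = deriv (fun s => β s j) s := fun s =>
      ((hasDerivAt_pi.1 (hβ.differentiable one_ne_zero s).hasDerivAt j).deriv).symm
    simp only [hd]
    refine scalar_integration_by_parts hf hα.1 hHolder
      (g := fun t => G t i j) (p := fun t => !![(1 : ℝ), t; t, t ^ 2] i j)
      ?_ ?_ hbj ?_ (measurable_Kmat_apply hf ξ i j) (fun s hs => Kmat_apply_of_ne f hs i j)
    · intro t
      have ht : |t| ≤ 1 + t ^ 2 := abs_le.2 ⟨by nlinarith [sq_nonneg (t + 1)],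
        by nlinarith [sq_nonneg (t - 1)]⟩
      fin_cases i <;> fin_cases j <;> simp [ht, sq_nonneg]
    · intro t
      exact hasDerivAt_pi.1 (hasDerivAt_pi.1 (hG t) i) j
    · exact hβs.comp_left (g := fun v : Fin 2 → ℝ => v j) rfl
  have hK : ∀ i, Integrable fun s => (Kmat f ξ s *ᵥ β s) i := fun i =>
    integrable_finsetSum Finset.univ fun j _ => (key i j).1
  have hGi : ∀ i, Integrable fun s => (G (Sdq f ξ s) *ᵥ deriv β s) i := fun i =>
    integrable_finsetSum Finset.univ fun j _ => (key i j).2.1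
  refine ⟨Integrable.of_eval hK, Integrable.of_eval hGi, ?_⟩
  funext i
  rw [eval_integral hK, eval_integral hGi]
  simp only [Matrix.mulVec, dotProduct]
  rw [integral_finsetSum _ fun j _ => (key i j).1, integral_finsetSum _ fun j _ => (key i j).2.1]
  exact Finset.sum_congr rfl fun j _ => (key i j).2.2
end
end

section
/- Let f ∈ C¹(ℝ) with f' bounded and α-Hölder continuous for some α ∈ (0,1), and let β ∈ C¹(ℝ, ℝ²) have compact support. Then the double layer potential Dβ : ℝ → ℝ² defined by Dβ(ξ) := (1/π) ∫_ℝ K(ξ,s) β(s) ds is continuously differentiable on ℝ, and its derivative is given by (Dβ)'(ξ) = −(1/π) ∫_ℝ K(s,ξ) β'(s) ds for every ξ ∈ ℝ; in particular the derivative of the double layer potential equals minus the L₂-adjoint double layer operator applied to β'. -/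
/-! The theorem rests on a symmetric potential of the kernel. With `q` the slope of the chord of `f`
between `ξ` and `s`, one has `K(ξ, s) = -∂ₛ Φ(ξ, s)` off the diagonal, where `Φ = G(q)` and
`G' (q) = [[1, q], [q, q²]] / (1 + q²)²`. Since `q` is symmetric in `(ξ, s)`, also
`K(s, ξ) = -∂_ξ Φ(ξ, s)`; and `Φ` is continuous in each variable across the diagonal, because `q`
extends by `f'`.

Everything is done for the scalar entries of `K`. Integration by parts
(`integral_scalarKernel_mul`) gives `∫ K(ξ, s) β(s) ds = ∫ Φ(ξ, s) β'(s) ds`. As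
`Φ(x, s) - Φ(ξ, s) = -∫ K(s, t) dt` over `t` from `ξ` to `x`, Fubini
(`integral_swap_weakly_singular`) expresses the increments of the potential as integrals of
`t ↦ -∫ K(s, t) β'(s) ds`. The Hölder condition bounds the kernel by a multiple of `|ξ - s|^(α - 1)`
(`abs_scalarKernel_le`), so this function is continuous (`continuous_weakly_singular`), and the
fundamental theorem of calculus concludes (`hasDerivAt_integral_scalarKernel`). -/

noncomputable section

open Matrix MeasureTheory Real

/-! ### Weakly singular integrals -/

section WeaklySingular

variable {α C : ℝ}

lemma locallyIntegrable_of_weakly_singular (hα : 0 < α) {g : ℝ → ℝ} (hg : Measurable g)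
    (hgC : ∀ u, |g u| ≤ C * |u| ^ (α - 1)) : LocallyIntegrable g := by
  refine locallyIntegrable_of_norm_le_rpow (C := C) (α := 1 - α) (by simp) (by simpa using hα)
    (ae_of_all _ fun u => ?_) hg.aestronglyMeasurable
  simpa using hgC u

lemma integrable_weakly_singular_mul (hα : 0 < α) {g : ℝ → ℝ} (hg : Measurable g) {ξ : ℝ}
    (hgC : ∀ s, |g s| ≤ C * |s - ξ| ^ (α - 1)) {b : ℝ → ℝ} (hb : Continuous b)
    (hbs : HasCompactSupport b) : Integrable fun s => g s * b s := by
  have h : LocallyIntegrable fun u => g (u + ξ) :=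
    locallyIntegrable_of_weakly_singular (C := C) hα (hg.comp (measurable_add_const ξ))
      fun u => by simpa using hgC (u + ξ)
  have h2 := h.integrable_smul_right_of_hasCompactSupport
    (hb.comp (continuous_add_const ξ)) (hbs.comp_homeomorph (Homeomorph.addRight ξ))
  simpa using h2.comp_sub_right ξ

/-- A weakly singular integral operator maps compactly supported continuous functions to
continuous functions. After the shift `s = t + u` the singularity sits at `u = 0` for every `t`,
so dominated convergence applies. -/
lemma continuous_weakly_singular (hα : 0 < α) {g : ℝ → ℝ → ℝ} (hg : Measurable g.uncurry)
    (hgC : ∀ s t, |g s t| ≤ C * |s - t| ^ (α - 1))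
    (hgc : ∀ u, u ≠ 0 → Continuous fun t => g (t + u) t)
    {b : ℝ → ℝ} (hb : Continuous b) (hbs : HasCompactSupport b) :
    Continuous fun t => ∫ s, g s t * b s := by
  have hshift : ∀ t, ∫ s, g s t * b s = ∫ u, g (t + u) t * b (t + u) := fun t =>
    (integral_add_left_eq_self (fun s => g s t * b s) t).symm
  simp_rw [hshift]
  obtain ⟨B, hB⟩ := hb.bounded_above_of_compact_support hbs
  have hB0 : 0 ≤ B := (norm_nonneg _).trans (hB 0)
  obtain ⟨R, hR⟩ := hbs.isCompact.isBounded.exists_norm_le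
  rw [continuous_iff_continuousAt]
  intro t₀
  set L : ℝ := R + |t₀| + 1 with hL
  have hloc : LocallyIntegrable fun u : ℝ => C * |u| ^ (α - 1) * B := by
    refine locallyIntegrable_of_weakly_singular (C := |C * B|) hα (by fun_prop) fun u => ?_
    rw [mul_right_comm, abs_mul, abs_of_nonneg (Real.rpow_nonneg (abs_nonneg u) _)]
  refine continuousAt_of_dominated
    (bound := (Set.Icc (-L) L).indicator fun u : ℝ => C * |u| ^ (α - 1) * B) ?_ ?_ ?_ ?_
  · refine Filter.Eventually.of_forall fun t => Measurable.aestronglyMeasurable ?_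
    refine Measurable.mul ?_ (by fun_prop)
    exact hg.comp (f := fun u : ℝ => (t + u, t)) (by fun_prop)
  · filter_upwards [Metric.ball_mem_nhds t₀ one_pos] with t ht
    refine ae_of_all _ fun u => ?_
    rw [Metric.mem_ball, Real.dist_eq] at ht
    have hk : |g (t + u) t| ≤ C * |u| ^ (α - 1) := by simpa using hgC (t + u) t
    by_cases hu : u ∈ Set.Icc (-L) L
    · rw [Set.indicator_of_mem hu, norm_mul]
      exact mul_le_mul hk (hB _) (norm_nonneg _) ((abs_nonneg _).trans hk)
    · rw [Set.indicator_of_notMem hu]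
      have : b (t + u) = 0 := by
        by_contra hne
        have h1 := hR (t + u) (subset_tsupport _ hne)
        rw [Real.norm_eq_abs] at h1
        apply hu
        rw [Set.mem_Icc, ← abs_le]
        have h2 : |u| ≤ |t + u| + |t - t₀| + |t₀| := by
          have e : u = (t + u) - (t - t₀) - t₀ := by ring
          calc |u| = |(t + u) - (t - t₀) - t₀| := by rw [← e]
            _ ≤ |(t + u) - (t - t₀)| + |t₀| := abs_sub _ _
            _ ≤ _ := by gcongr; exact abs_sub _ _
        linarith
      simp [this]
  · exact (integrable_indicator_iff measurableSet_Icc).2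
      (hloc.integrableOn_isCompact isCompact_Icc)
  · have h0 : ∀ᵐ u : ℝ, u ≠ 0 := by simp [ae_iff]
    filter_upwards [h0] with u hu
    exact ((hgc u hu).mul (by fun_prop)).continuousAt

/-- Fubini for a weakly singular kernel. -/
lemma integral_swap_weakly_singular (hα : 0 < α) {g : ℝ → ℝ → ℝ} (hg : Measurable g.uncurry)
    (hgC : ∀ s t, |g s t| ≤ C * |s - t| ^ (α - 1))
    (hgc : ∀ u, u ≠ 0 → Continuous fun t => g (t + u) t)
    {b : ℝ → ℝ} (hb : Continuous b) (hbs : HasCompactSupport b) (x y : ℝ) :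
    ∫ t in x..y, ∫ s, g s t * b s = ∫ s, (∫ t in x..y, g s t) * b s := by
  rw [intervalIntegral_integral_swap]
  · simp_rw [intervalIntegral.integral_mul_const]
  have hm : Measurable (Function.uncurry fun t s => g s t * b s) := by
    refine Measurable.mul (f := fun z : ℝ × ℝ => g z.2 z.1) ?_ (by fun_prop)
    exact hg.comp measurable_swap
  rw [integrable_prod_iff hm.aestronglyMeasurable]
  constructor
  · refine ae_of_all _ fun t => integrable_weakly_singular_mul (C := C) hα ?_
      (fun s => hgC s t) hb hbs
    exact hg.comp (f := fun s : ℝ => (s, t)) (by fun_prop)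
  · have hc := continuous_weakly_singular (g := fun s t => |g s t|) (C := C) hα
      hg.abs (by simpa using hgC) (fun u hu => (hgc u hu).abs) hb.abs
      (hbs.comp_left (g := fun x : ℝ => |x|) abs_zero)
    have := hc.intervalIntegrable (μ := volume) x y
    rw [intervalIntegrable_iff] at this
    simpa [Function.uncurry, abs_mul, IntegrableOn] using this

end WeaklySingular

/-! ### The scalar double layer kernel -/

section ScalarKernel

/-- The scalar kernel `p(q) (r₁ f'(s) - r₂) / r₁²`, where `r = (ξ - s, f ξ - f s)` and `q = r₂ / r₁`
is the slope of the chord. The entries of `Kmat` are of this form with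
`p(q) = qᵏ / (1 + q²)²`, `k = 0, 1, 2`. On the diagonal it takes the value `0`. -/
def scalarKernel (p f : ℝ → ℝ) (ξ s : ℝ) : ℝ :=
  p ((f ξ - f s) / (ξ - s)) * (((ξ - s) * deriv f s - (f ξ - f s)) / (ξ - s) ^ 2)

/-- The antiderivative of `p` vanishing at `0`, evaluated at the slope of the chord of `f` between
`ξ` and `s`; on the diagonal the slope is replaced by `f' ξ`. Off the diagonal its `s`-derivative is
`-scalarKernel p f ξ s`. -/
def chordPotential (p f : ℝ → ℝ) (ξ s : ℝ) : ℝ :=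
  ∫ x in (0 : ℝ)..dslope f ξ s, p x

variable {p f : ℝ → ℝ}

lemma chordPotential_comm (ξ s : ℝ) : chordPotential p f ξ s = chordPotential p f s ξ := by
  rcases eq_or_ne ξ s with rfl | h
  · rfl
  · rw [chordPotential, chordPotential, dslope_of_ne _ h.symm, dslope_of_ne _ h, slope_comm]

lemma continuous_chordPotential (hp : Continuous p) (hf : Differentiable ℝ f) (ξ : ℝ) :
    Continuous (chordPotential p f ξ) := by
  have h1 : Continuous (dslope f ξ) := by
    rw [continuous_iff_continuousAt]
    intro s
    rcases eq_or_ne s ξ with rfl | h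
    · exact continuousAt_dslope_same.2 (hf s)
    · exact (continuousAt_dslope_of_ne h).2 (hf s).continuousAt
  exact (intervalIntegral.continuous_primitive
    (fun a b => hp.intervalIntegrable a b) 0).comp h1

lemma hasDerivAt_chordPotential (hp : Continuous p) (hf : Differentiable ℝ f) {ξ s : ℝ}
    (h : s ≠ ξ) : HasDerivAt (chordPotential p f ξ) (-scalarKernel p f ξ s) s := by
  have hne : ξ - s ≠ 0 := sub_ne_zero.2 h.symm
  have hq : HasDerivAt (fun x => (f ξ - f x) / (ξ - x))
      (((-deriv f s) * (ξ - s) - (f ξ - f s) * (-1)) / (ξ - s) ^ 2) s :=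
    ((hf s).hasDerivAt.const_sub _).div ((hasDerivAt_id s).const_sub ξ) hne
  have hslope : ∀ x, x ≠ ξ → dslope f ξ x = (f ξ - f x) / (ξ - x) := fun x hx => by
    rw [dslope_of_ne _ hx, slope_comm, slope_def_field]
  have hq' : HasDerivAt (dslope f ξ)
      (((-deriv f s) * (ξ - s) - (f ξ - f s) * (-1)) / (ξ - s) ^ 2) s := by
    refine hq.congr_of_eventuallyEq ?_
    filter_upwards [isOpen_ne.mem_nhds h] with x hx using hslope x hx
  have hG := (hp.integral_hasStrictDerivAt 0 (dslope f ξ s)).hasDerivAt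
  have := hG.comp s hq'
  rw [hslope s h] at this
  refine this.congr_deriv ?_
  rw [scalarKernel, ← mul_neg, ← neg_div]
  congr 2
  ring

/-- The Hölder condition on `f'` makes the kernel weakly singular. -/
lemma abs_scalarKernel_le (hp1 : ∀ x, |p x| ≤ 1) (hf : Differentiable ℝ f) {α H : ℝ}
    (hα : 0 < α) (hH : ∀ x y : ℝ, x ≠ y → |deriv f x - deriv f y| ≤ H * |x - y| ^ α) (ξ s : ℝ) :
    |scalarKernel p f ξ s| ≤ H * |ξ - s| ^ (α - 1) := by
  have hH0 : 0 ≤ H := by simpa using (abs_nonneg _).trans (hH 0 1 (by norm_num))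
  rcases eq_or_ne ξ s with rfl | h
  · simpa [scalarKernel] using mul_nonneg hH0 (Real.rpow_nonneg le_rfl _)
  have hpos : 0 < |ξ - s| := abs_pos.2 (sub_ne_zero.2 h)
  -- The mean value theorem: `f ξ - f s = f'(c) (ξ - s)` with `c` between `s` and `ξ`.
  obtain ⟨c, hc, hcs⟩ : ∃ c, |s - c| ≤ |ξ - s| ∧ f ξ - f s = deriv f c * (ξ - s) := by
    rcases lt_or_gt_of_ne h with h | h
    · obtain ⟨c, hc, e⟩ := exists_deriv_eq_slope f h hf.continuous.continuousOn
        hf.differentiableOn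
      refine ⟨c, ?_, ?_⟩
      · rw [abs_of_pos (sub_pos.2 hc.2), abs_of_neg (sub_neg.2 h)]; linarith [hc.1]
      · rw [e]; have := (sub_pos.2 h).ne'; field_simp; ring
    · obtain ⟨c, hc, e⟩ := exists_deriv_eq_slope f h hf.continuous.continuousOn
        hf.differentiableOn
      refine ⟨c, ?_, ?_⟩
      · rw [abs_of_neg (sub_neg.2 hc.1), abs_of_pos (sub_pos.2 h)]; linarith [hc.2]
      · rw [e]; have := (sub_pos.2 h).ne'; field_simp
  have hd : |deriv f s - deriv f c| ≤ H * |ξ - s| ^ α := by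
    rcases eq_or_ne s c with rfl | hne
    · simpa using mul_nonneg hH0 (Real.rpow_nonneg hpos.le _)
    · exact (hH s c hne).trans (by gcongr)
  have e : ((ξ - s) * deriv f s - (f ξ - f s)) / (ξ - s) ^ 2
      = (deriv f s - deriv f c) / (ξ - s) := by
    rw [hcs]; have := sub_ne_zero.2 h; field_simp
  rw [scalarKernel, e, abs_mul, abs_div, Real.rpow_sub_one hpos.ne']
  refine (mul_le_of_le_one_left (div_nonneg (abs_nonneg _) hpos.le) (hp1 _)).trans ?_
  rw [← mul_div_assoc]
  exact div_le_div_of_nonneg_right hd hpos.le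

lemma measurable_scalarKernel (hp : Continuous p) (hf : Continuous f) (hf' : Continuous (deriv f)) :
    Measurable (scalarKernel p f).uncurry := by
  unfold scalarKernel Function.uncurry
  have := hp.measurable
  have := hf.measurable
  have := hf'.measurable
  fun_prop

lemma continuous_scalarKernel_shift (hp : Continuous p) (hf : Continuous f)
    (hf' : Continuous (deriv f)) (u : ℝ) :
    Continuous fun t => scalarKernel p f (t + u) t := by
  have h : ∀ t : ℝ, t + u - t = u := fun t => by ring
  simp only [scalarKernel, h]
  fun_prop

variable {α H : ℝ} {b : ℝ → ℝ}

lemma integrable_scalarKernel_mul (hp : Continuous p) (hp1 : ∀ x, |p x| ≤ 1) (hf : ContDiff ℝ 1 f)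
    (hα : 0 < α) (hH : ∀ x y : ℝ, x ≠ y → |deriv f x - deriv f y| ≤ H * |x - y| ^ α)
    (hb : Continuous b) (hbs : HasCompactSupport b) (ξ : ℝ) :
    Integrable fun s => scalarKernel p f ξ s * b s := by
  refine integrable_weakly_singular_mul (C := H) (ξ := ξ) hα ?_ (fun s => ?_) hb hbs
  · exact (measurable_scalarKernel hp hf.continuous (hf.continuous_deriv le_rfl)).comp
      (f := fun s : ℝ => (ξ, s)) (by fun_prop)
  · rw [abs_sub_comm s ξ]
    exact abs_scalarKernel_le hp1 (hf.differentiable one_ne_zero) hα hH ξ s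

lemma integrable_scalarKernel_adjoint_mul (hp : Continuous p) (hp1 : ∀ x, |p x| ≤ 1)
    (hf : ContDiff ℝ 1 f)
    (hα : 0 < α) (hH : ∀ x y : ℝ, x ≠ y → |deriv f x - deriv f y| ≤ H * |x - y| ^ α)
    (hb : Continuous b) (hbs : HasCompactSupport b) (ξ : ℝ) :
    Integrable fun s => scalarKernel p f s ξ * b s := by
  refine integrable_weakly_singular_mul (C := H) (ξ := ξ) hα ?_ (fun s => ?_) hb hbs
  · exact (measurable_scalarKernel hp hf.continuous (hf.continuous_deriv le_rfl)).comp
      (f := fun s : ℝ => (s, ξ)) (by fun_prop)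
  · exact abs_scalarKernel_le hp1 (hf.differentiable one_ne_zero) hα hH s ξ

lemma continuous_integral_scalarKernel_adjoint (hp : Continuous p) (hp1 : ∀ x, |p x| ≤ 1)
    (hf : ContDiff ℝ 1 f)
    (hα : 0 < α) (hH : ∀ x y : ℝ, x ≠ y → |deriv f x - deriv f y| ≤ H * |x - y| ^ α)
    (hb : Continuous b) (hbs : HasCompactSupport b) :
    Continuous fun ξ => ∫ s, scalarKernel p f s ξ * b s :=
  continuous_weakly_singular (C := H) hα
    (measurable_scalarKernel hp hf.continuous (hf.continuous_deriv le_rfl))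
    (abs_scalarKernel_le hp1 (hf.differentiable one_ne_zero) hα hH)
    (fun u _ => continuous_scalarKernel_shift hp hf.continuous (hf.continuous_deriv le_rfl) u)
    hb hbs

/-- Integration by parts across the diagonal: there is no boundary term at `s = ξ` since the
potential is continuous there. -/
lemma integral_scalarKernel_mul (hp : Continuous p) (hp1 : ∀ x, |p x| ≤ 1) (hf : ContDiff ℝ 1 f)
    (hα : 0 < α) (hH : ∀ x y : ℝ, x ≠ y → |deriv f x - deriv f y| ≤ H * |x - y| ^ α)
    (hb : ContDiff ℝ 1 b) (hbs : HasCompactSupport b) (ξ : ℝ) :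
    ∫ s, scalarKernel p f ξ s * b s = ∫ s, chordPotential p f ξ s * deriv b s := by
  have hfd := hf.differentiable one_ne_zero
  have hΦ := continuous_chordPotential hp hfd ξ
  have hb' := hb.continuous_deriv le_rfl
  have h1 := integrable_scalarKernel_mul hp hp1 hf hα hH hb.continuous hbs ξ
  have h2 : Integrable fun s => chordPotential p f ξ s * deriv b s :=
    (hΦ.mul hb').integrable_of_hasCompactSupport hbs.deriv.mul_left
  rw [← sub_eq_zero, ← neg_eq_zero, neg_sub, ← integral_sub h2 h1]
  obtain ⟨R, hR⟩ := hbs.isCompact.isBounded.exists_norm_le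
  have hRs : ∀ s, R < |s| → b s = 0 ∧ deriv b s = 0 := fun s hs => by
    have hn : s ∉ tsupport b := fun hm => absurd (hR s hm) (by simpa using hs)
    exact ⟨image_eq_zero_of_notMem_tsupport hn,
      image_eq_zero_of_notMem_tsupport fun h => hn (tsupport_deriv_subset h)⟩
  have hlt : R < |(-(|R| + 1))| := by
    rw [abs_neg, abs_of_pos (by positivity)]; linarith [le_abs_self R]
  have hlt' : R < |(|R| + 1)| := by
    rw [abs_of_pos (by positivity)]; linarith [le_abs_self R]
  rw [← intervalIntegral.integral_eq_integral_of_support_subset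
    (a := -(|R| + 1)) (b := |R| + 1)]
  · rw [integral_eq_of_hasDerivAt_off_countable
      (fun s => chordPotential p f ξ s * b s)
      (fun s => chordPotential p f ξ s * deriv b s - scalarKernel p f ξ s * b s) (Set.countable_singleton ξ)
      (hΦ.mul hb.continuous).continuousOn ?_ (h2.sub h1).intervalIntegrable]
    · simp only [(hRs _ hlt).1, (hRs _ hlt').1, mul_zero, sub_zero]
    · intro s hs
      refine ((hasDerivAt_chordPotential hp hfd hs.2).mul
        ((hb.differentiable one_ne_zero) s).hasDerivAt).congr_deriv ?_
      ring
  · intro s hs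
    by_contra hns
    apply hs
    have : R < |s| := by
      rw [Set.mem_Ioc, not_and_or, not_lt, not_le] at hns
      rcases hns with h | h
      · linarith [neg_le_abs s, le_abs_self R]
      · linarith [le_abs_self s, le_abs_self R]
    simp [hRs s this]

/-- The scalar form of the theorem. With `Φ` the chord potential, integrating by parts turns the
left-hand side into `∫ Φ(ξ, s) b'(s) ds`; the symmetry of `Φ` and Fubini write its increments as
`-∫ (∫ k(s, t) b'(s) ds) dt`, whose integrand in `t` is continuous. -/
lemma hasDerivAt_integral_scalarKernel (hp : Continuous p) (hp1 : ∀ x, |p x| ≤ 1)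
    (hf : ContDiff ℝ 1 f)
    (hα : 0 < α) (hH : ∀ x y : ℝ, x ≠ y → |deriv f x - deriv f y| ≤ H * |x - y| ^ α)
    (hb : ContDiff ℝ 1 b) (hbs : HasCompactSupport b) (ξ : ℝ) :
    HasDerivAt (fun ξ => ∫ s, scalarKernel p f ξ s * b s)
      (-∫ s, scalarKernel p f s ξ * deriv b s) ξ := by
  have hfd := hf.differentiable one_ne_zero
  have hb' := hb.continuous_deriv le_rfl
  have hm := measurable_scalarKernel hp hf.continuous (hf.continuous_deriv le_rfl)
  have hbd := abs_scalarKernel_le hp1 hfd hα hH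
  have hI : ∀ ξ, Integrable fun s => chordPotential p f ξ s * deriv b s := fun ξ =>
    ((continuous_chordPotential hp hfd ξ).mul hb').integrable_of_hasCompactSupport
      hbs.deriv.mul_left
  have hA := continuous_integral_scalarKernel_adjoint hp hp1 hf hα hH hb' hbs.deriv
  -- The fundamental theorem of calculus in the variable `t` of `Φ(t, s) = Φ(s, t)`.
  have hftc : ∀ x s, ∫ t in ξ..x, scalarKernel p f s t
      = chordPotential p f ξ s - chordPotential p f x s := by
    intro x s
    rw [chordPotential_comm ξ, chordPotential_comm x]
    have hint : IntervalIntegrable (scalarKernel p f s) volume ξ x := by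
      have h := locallyIntegrable_of_weakly_singular (C := H) hα
        (g := fun u => scalarKernel p f s (s - u))
        (hm.comp (f := fun u : ℝ => (s, s - u)) (by fun_prop))
        (fun u => by simpa using hbd s (s - u))
      have h' := (h.integrableOn_isCompact
        (isCompact_uIcc (a := s - ξ) (b := s - x))).intervalIntegrable
      simpa using h'.comp_sub_left s
    have := integral_eq_of_hasDerivAt_off_countable (a := ξ) (b := x)
      (fun t => -chordPotential p f s t) (scalarKernel p f s) (Set.countable_singleton s)
      (continuous_chordPotential hp hfd s).neg.continuousOn
      (fun t ht => by
        simpa only [neg_neg] using (hasDerivAt_chordPotential hp hfd ht.2).fun_neg)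
      hint
    rw [this]; ring
  have hD : (fun x => ∫ s, scalarKernel p f x s * b s) = fun x =>
      (∫ s, scalarKernel p f ξ s * b s)
        - ∫ t in ξ..x, ∫ s, scalarKernel p f s t * deriv b s := by
    funext x
    rw [integral_swap_weakly_singular (C := H) hα hm hbd
      (fun u _ => continuous_scalarKernel_shift hp hf.continuous
        (hf.continuous_deriv le_rfl) u) hb' hbs.deriv]
    simp_rw [hftc, integral_scalarKernel_mul hp hp1 hf hα hH hb hbs, sub_mul]
    rw [integral_sub (hI ξ) (hI x)]
    ring
  rw [hD]
  exact (hA.integral_hasStrictDerivAt ξ ξ).hasDerivAt.const_sub _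

end ScalarKernel

/-! ### The matrix kernel -/

/-- The profile `p` for which `scalarKernel p f` is the `(i, j)` entry of `Kmat f`. -/
def kernelProfile (i j : Fin 2) (q : ℝ) : ℝ := q ^ (i.val + j.val) / (1 + q ^ 2) ^ 2

lemma continuous_kernelProfile (i j : Fin 2) : Continuous (kernelProfile i j) := by
  unfold kernelProfile
  exact Continuous.div (by fun_prop) (by fun_prop) fun q => by positivity

lemma abs_kernelProfile_le (i j : Fin 2) (q : ℝ) : |kernelProfile i j q| ≤ 1 := by
  have h : 0 < (1 + q ^ 2) ^ 2 := by positivity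
  rw [kernelProfile, abs_div, abs_of_pos h, div_le_one h, abs_le]
  fin_cases i <;> fin_cases j <;> constructor <;>
    simp only [Nat.reduceAdd, pow_zero, pow_one] <;>
    nlinarith [sq_nonneg (q - 1), sq_nonneg (q + 1), sq_nonneg q, sq_nonneg (q ^ 2)]

lemma Kmat_apply (f : ℝ → ℝ) (ξ s : ℝ) (i j : Fin 2) :
    Kmat f ξ s i j = scalarKernel (kernelProfile i j) f ξ s := by
  rcases eq_or_ne ξ s with rfl | h
  · simp [Kmat, scalarKernel]
  have h0 : ξ - s ≠ 0 := sub_ne_zero.2 h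
  have h1 : (ξ - s) ^ 2 + (f ξ - f s) ^ 2 ≠ 0 := by positivity
  have h2 : 1 + ((f ξ - f s) / (ξ - s)) ^ 2
      = ((ξ - s) ^ 2 + (f ξ - f s) ^ 2) / (ξ - s) ^ 2 := by field_simp
  rw [scalarKernel, kernelProfile, h2]
  fin_cases i <;> fin_cases j <;> simp [Kmat] <;> field_simp

/-- Let `f ∈ C¹(ℝ)` with `f'` bounded and α-Hölder continuous, `α ∈ (0,1)`, and let
`β ∈ C¹(ℝ,ℝ²)` have compact support.  Then the double layer potential
`Dβ(ξ) = (1/π) ∫ K(ξ,s) β(s) ds` is continuously differentiable on `ℝ`, and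
`(Dβ)'(ξ) = −(1/π) ∫ K(s,ξ) β'(s) ds` for every `ξ`; i.e. the derivative of the
double layer potential equals minus the L₂-adjoint double layer operator at `β'`. -/
theorem deriv_double_layer_potential
    (f : ℝ → ℝ) (hf : ContDiff ℝ 1 f)
    (hf' : ∃ M, ∀ x, |deriv f x| ≤ M)
    (α : ℝ) (hα : α ∈ Set.Ioo (0 : ℝ) 1) (H : ℝ)
    (hHolder : ∀ x y : ℝ, x ≠ y → |deriv f x - deriv f y| ≤ H * |x - y| ^ α)
    (β : ℝ → Fin 2 → ℝ) (hβ : ContDiff ℝ 1 β) (hβs : HasCompactSupport β)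
    (Dβ : ℝ → Fin 2 → ℝ)
    (hDβ : Dβ = fun ξ => (1 / π) • ∫ s, Kmat f ξ s *ᵥ β s) :
    ContDiff ℝ 1 Dβ ∧
    ∀ ξ : ℝ, deriv Dβ ξ = -(1 / π) • ∫ s, Kmat f s ξ *ᵥ deriv β s := by
  have hb : ∀ j, ContDiff ℝ 1 fun s => β s j := contDiff_pi.1 hβ
  have hbs : ∀ j, HasCompactSupport fun s => β s j := fun j =>
    hβs.comp_left (g := fun v : Fin 2 → ℝ => v j) rfl
  have hb' : ∀ s j, deriv β s j = deriv (fun s => β s j) s := fun s j => by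
    rw [deriv_pi fun i => ((hb i).differentiable one_ne_zero) s]
  have hbc : ∀ j, Continuous (deriv fun s => β s j) := fun j => (hb j).continuous_deriv le_rfl
  -- Both integrals, written entrywise in terms of the scalar kernels.
  have hK : ∀ ξ i, (∫ s, Kmat f ξ s *ᵥ β s) i
      = ∑ j, ∫ s, scalarKernel (kernelProfile i j) f ξ s * β s j := by
    intro ξ i
    have hint : ∀ i j, Integrable fun s => scalarKernel (kernelProfile i j) f ξ s * β s j :=
      fun i j => integrable_scalarKernel_mul (continuous_kernelProfile i j)
        (abs_kernelProfile_le i j) hf hα.1 hHolder (hb j).continuous (hbs j) ξ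
    have he : ∀ i, (fun s => (Kmat f ξ s *ᵥ β s) i)
        = fun s => ∑ j, scalarKernel (kernelProfile i j) f ξ s * β s j := fun i => by
      funext s; simp only [Matrix.mulVec, dotProduct, Kmat_apply]
    rw [eval_integral fun i => by rw [he i]; exact integrable_finsetSum _ fun j _ => hint i j,
      he i, integral_finsetSum _ fun j _ => hint i j]
  have hA : ∀ ξ i, (∫ s, Kmat f s ξ *ᵥ deriv β s) i
      = ∑ j, ∫ s, scalarKernel (kernelProfile i j) f s ξ * deriv (fun s => β s j) s := by
    intro ξ i
    have hint : ∀ i j, Integrable fun s =>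
        scalarKernel (kernelProfile i j) f s ξ * deriv (fun s => β s j) s :=
      fun i j => integrable_scalarKernel_adjoint_mul (continuous_kernelProfile i j)
        (abs_kernelProfile_le i j) hf hα.1 hHolder (hbc j) (hbs j).deriv ξ
    have he : ∀ i, (fun s => (Kmat f s ξ *ᵥ deriv β s) i)
        = fun s => ∑ j, scalarKernel (kernelProfile i j) f s ξ * deriv (fun s => β s j) s :=
      fun i => by funext s; simp only [Matrix.mulVec, dotProduct, Kmat_apply, hb']
    rw [eval_integral fun i => by rw [he i]; exact integrable_finsetSum _ fun j _ => hint i j,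
      he i, integral_finsetSum _ fun j _ => hint i j]
  have hderiv : ∀ ξ, HasDerivAt Dβ (-(1 / π) • ∫ s, Kmat f s ξ *ᵥ deriv β s) ξ := by
    intro ξ
    rw [hasDerivAt_pi]
    intro i
    simp only [hDβ, Pi.smul_apply, smul_eq_mul, hK, hA]
    rw [neg_mul, ← mul_neg, ← Finset.sum_neg_distrib]
    exact (HasDerivAt.fun_sum fun j _ => hasDerivAt_integral_scalarKernel
      (continuous_kernelProfile i j) (abs_kernelProfile_le i j) hf hα.1 hHolder (hb j) (hbs j)
      ξ).const_mul _
  refine ⟨contDiff_one_iff_deriv.2 ⟨fun ξ => (hderiv ξ).differentiableAt, ?_⟩,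
    fun ξ => (hderiv ξ).deriv⟩
  rw [funext fun ξ => (hderiv ξ).deriv]
  refine continuous_pi fun i => ?_
  simp only [Pi.smul_apply, smul_eq_mul, hA]
  exact continuous_const.mul (continuous_finsetSum _ fun j _ =>
    continuous_integral_scalarKernel_adjoint (continuous_kernelProfile i j)
      (abs_kernelProfile_le i j) hf hα.1 hHolder (hbc j) (hbs j).deriv)
end
end

section
/- Let f : ℝ → ℝ be continuous with graph Γ := {(ξ, f(ξ)) : ξ ∈ ℝ}, let β = (β₁, β₂) : ℝ → ℝ² be continuous with compact support, and let u and Π be the associated hydrodynamic single layer potentials. Then there exist constants C > 0 and R > 0 such that for every x ∈ ℝ²∖Γ with |x| ≥ R one has |Π(x)| ≤ C/|x| and ‖∇u(x)‖_F ≤ C/|x|, where ‖·‖_F is the Frobenius norm of the Jacobian matrix of u. -/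
/-! The kernels satisfy `|𝒫^k(a)| ≤ 1/|a|` and, away from the origin, a Lipschitz estimate
`|𝒰^k_j(a) - 𝒰^k_j(b)| ≤ 10 ‖a - b‖ / r` whenever `|a|, |b| ≥ r > 0` (`abs_Uc_sub_le`). The latter
follows from `|log |a| - log |b|| ≤ |a - b| / r` and from the fact that normalization
`a ↦ a / |a|` is `2/r`-Lipschitz there.

Since `β` has compact support, `|(s, f s)| ≤ M` on that support. For `|x| ≥ 4 M + 1` and `y` close
to `x` both `x - (s, f s)` and `y - (s, f s)` have length at least `|x| / 2`, so integrating the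
kernel estimates against `|β_k|` bounds `Π(x)` by a multiple of `1/|x|` and shows that `u` is
Lipschitz at `x` with a constant which is a multiple of `1/|x|`. The norm of the derivative at a
point is bounded by any local Lipschitz constant there, so no differentiation under the integral
sign is needed. -/


noncomputable section

open Real MeasureTheory

/-- The `j`-th coordinate of a point of `ℝ²`. -/
def coord (j : Fin 2) (y : ℝ × ℝ) : ℝ := if j = 0 then y.1 else y.2

/-- The `j`-th component of the fundamental velocity 𝒰^k of the 2D Stokes equations
with viscosity μ = 1:  𝒰^k_j(y) = −(1/(4π))(δ_{jk} ln(1/|y|) + y_j y_k/|y|²). -/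
def Uc (k j : Fin 2) (y : ℝ × ℝ) : ℝ :=
  -(1 / (4 * π)) *
    ((if j = k then (1 : ℝ) else 0) * Real.log (1 / Real.sqrt (y.1 ^ 2 + y.2 ^ 2))
      + coord j y * coord k y / (y.1 ^ 2 + y.2 ^ 2))

/-- The fundamental pressure 𝒫^k(y) = −(1/(2π)) y_k/|y|². -/
def Pk (k : Fin 2) (y : ℝ × ℝ) : ℝ :=
  -(1 / (2 * π)) * coord k y / (y.1 ^ 2 + y.2 ^ 2)

/-- The `j`-th component of the hydrodynamic single layer potential velocity
`u(x) = −∑_k ∫ 𝒰^k(x − (s, f(s))) β_k(s) ds`. -/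
def slp (f : ℝ → ℝ) (β : Fin 2 → ℝ → ℝ) (j : Fin 2) (x : ℝ × ℝ) : ℝ :=
  -∑ k : Fin 2, ∫ s, Uc k j (x - (s, f s)) * β k s

/-- The hydrodynamic single layer potential pressure
`Π(x) = −∑_k ∫ 𝒫^k(x − (s, f(s))) β_k(s) ds`. -/
def slpP (f : ℝ → ℝ) (β : Fin 2 → ℝ → ℝ) (x : ℝ × ℝ) : ℝ :=
  -∑ k : Fin 2, ∫ s, Pk k (x - (s, f s)) * β k s

/-- Euclidean length on `ℝ × ℝ`, whose `‖·‖` is the sup norm. -/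
def eucl (a : ℝ × ℝ) : ℝ := Real.sqrt (a.1 ^ 2 + a.2 ^ 2)

lemma eucl_eq (a : ℝ × ℝ) : eucl a = ‖(⟨a.1, a.2⟩ : ℂ)‖ := by
  rw [Complex.norm_eq_sqrt_sq_add_sq]; rfl

lemma eucl_nonneg (a : ℝ × ℝ) : 0 ≤ eucl a := Real.sqrt_nonneg _

lemma eucl_sq (a : ℝ × ℝ) : eucl a ^ 2 = a.1 ^ 2 + a.2 ^ 2 :=
  Real.sq_sqrt (by positivity)

lemma abs_eucl_sub_le (a b : ℝ × ℝ) : |eucl a - eucl b| ≤ eucl (a - b) := by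
  rw [eucl_eq, eucl_eq, eucl_eq]
  exact abs_norm_sub_norm_le _ _

lemma eucl_le (a : ℝ × ℝ) : eucl a ≤ 2 * ‖a‖ := by
  have h1 : |a.1| ≤ ‖a‖ := norm_fst_le a
  have h2 : |a.2| ≤ ‖a‖ := norm_snd_le a
  have h := norm_nonneg a
  refine Real.sqrt_le_iff.2 ⟨by positivity, ?_⟩
  nlinarith [sq_abs a.1, sq_abs a.2, abs_nonneg a.1, abs_nonneg a.2]

lemma abs_coord_le (j : Fin 2) (a : ℝ × ℝ) : |coord j a| ≤ eucl a := by
  unfold coord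
  split_ifs
  · exact Real.abs_le_sqrt (by nlinarith [sq_nonneg a.2])
  · exact Real.abs_le_sqrt (by nlinarith [sq_nonneg a.1])

lemma coord_sub (j : Fin 2) (a b : ℝ × ℝ) : coord j (a - b) = coord j a - coord j b := by
  unfold coord
  split_ifs <;> rfl

lemma continuous_coord (j : Fin 2) : Continuous (coord j) := by
  unfold coord
  split_ifs
  · exact continuous_fst
  · exact continuous_snd

lemma abs_coord_div_le (j : Fin 2) (a : ℝ × ℝ) : |coord j a / eucl a| ≤ 1 := by
  rw [abs_div, abs_of_nonneg (eucl_nonneg a)]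
  exact div_le_one_of_le₀ (abs_coord_le j a) (eucl_nonneg a)

lemma abs_log_eucl_sub_le {r : ℝ} (hr : 0 < r) {a b : ℝ × ℝ} (ha : r ≤ eucl a)
    (hb : r ≤ eucl b) : |Real.log (eucl a) - Real.log (eucl b)| ≤ eucl (a - b) / r := by
  have key : ∀ p q : ℝ, r ≤ p → r ≤ q → |p - q| ≤ eucl (a - b) →
      Real.log p - Real.log q ≤ eucl (a - b) / r := by
    intro p q hp hq hpq
    have hp0 := hr.trans_le hp
    have hq0 := hr.trans_le hq
    rw [← Real.log_div hp0.ne' hq0.ne']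
    calc Real.log (p / q) ≤ p / q - 1 := Real.log_le_sub_one_of_pos (by positivity)
      _ = (p - q) / q := by field_simp
      _ ≤ |p - q| / q := by gcongr; exact le_abs_self _
      _ ≤ eucl (a - b) / r := by
        gcongr
        exact eucl_nonneg _
  have h := abs_eucl_sub_le a b
  refine abs_sub_le_iff.2 ⟨key _ _ ha hb h, key _ _ hb ha ?_⟩
  rwa [abs_sub_comm]

/-- Normalization is Lipschitz outside the disc of radius `r`, by the splitting
`a_j/|a| - b_j/|b| = (a_j - b_j)/|a| + (b_j/|b|) (|b| - |a|)/|a|`. -/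
lemma abs_coord_div_sub_le {r : ℝ} (hr : 0 < r) {a b : ℝ × ℝ} (ha : r ≤ eucl a)
    (hb : r ≤ eucl b) (j : Fin 2) :
    |coord j a / eucl a - coord j b / eucl b| ≤ 2 * (eucl (a - b) / r) := by
  have ha0 := hr.trans_le ha
  have hb0 := hr.trans_le hb
  have e : coord j a / eucl a - coord j b / eucl b =
      coord j (a - b) / eucl a + (coord j b / eucl b) * ((eucl b - eucl a) / eucl a) := by
    rw [coord_sub]; field_simp; ring
  have hn := eucl_nonneg (a - b)
  have h1 : |coord j (a - b) / eucl a| ≤ eucl (a - b) / r := by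
    rw [abs_div, abs_of_pos ha0]
    gcongr
    exact abs_coord_le _ _
  have h2 : |(eucl b - eucl a) / eucl a| ≤ eucl (a - b) / r := by
    rw [abs_div, abs_of_pos ha0, abs_sub_comm]
    gcongr
    exact abs_eucl_sub_le _ _
  rw [e]
  calc _ ≤ |coord j (a - b) / eucl a|
        + |coord j b / eucl b| * |(eucl b - eucl a) / eucl a| := by
        rw [← abs_mul]; exact abs_add_le _ _
    _ ≤ eucl (a - b) / r + 1 * (eucl (a - b) / r) := by
        gcongr
        exact abs_coord_div_le _ _
    _ = _ := by ring

lemma Uc_eq (k j : Fin 2) (a : ℝ × ℝ) : Uc k j a = -(1 / (4 * π)) *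
    ((if j = k then (1 : ℝ) else 0) * (-Real.log (eucl a))
      + (coord j a / eucl a) * (coord k a / eucl a)) := by
  rw [div_mul_div_comm, ← sq (eucl a), eucl_sq, ← Real.log_inv, inv_eq_one_div]
  rfl

lemma abs_Uc_sub_le {r : ℝ} (hr : 0 < r) {a b : ℝ × ℝ} (ha : r ≤ eucl a)
    (hb : r ≤ eucl b) (k j : Fin 2) :
    |Uc k j a - Uc k j b| ≤ 10 / r * ‖a - b‖ := by
  set D := eucl (a - b) / r with hD
  have hDn : D ≤ 2 / r * ‖a - b‖ := by
    rw [hD, div_mul_eq_mul_div]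
    gcongr
    exact eucl_le _
  have hD0 : 0 ≤ D := div_nonneg (eucl_nonneg _) hr.le
  have hl : |(if j = k then (1 : ℝ) else 0) * (Real.log (eucl b) - Real.log (eucl a))| ≤ D := by
    split_ifs
    · rw [one_mul, abs_sub_comm]
      exact abs_log_eucl_sub_le hr ha hb
    · simpa using hD0
  have hp : |coord j a / eucl a * (coord k a / eucl a - coord k b / eucl b)
      + (coord j a / eucl a - coord j b / eucl b) * (coord k b / eucl b)| ≤ 4 * D := by
    calc _ ≤ |coord j a / eucl a| * |coord k a / eucl a - coord k b / eucl b|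
      + |coord j a / eucl a - coord j b / eucl b| * |coord k b / eucl b| := by
          rw [← abs_mul, ← abs_mul]; exact abs_add_le _ _
      _ ≤ 1 * (2 * D) + 2 * D * 1 := by
          gcongr
          · exact abs_coord_div_le _ _
          · exact abs_coord_div_sub_le hr ha hb k
          · exact abs_coord_div_sub_le hr ha hb j
          · exact abs_coord_div_le _ _
      _ = 4 * D := by ring
  have e : Uc k j a - Uc k j b = -(1 / (4 * π)) *
      ((if j = k then (1 : ℝ) else 0) * (Real.log (eucl b) - Real.log (eucl a)) +
      (coord j a / eucl a * (coord k a / eucl a - coord k b / eucl b)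
      + (coord j a / eucl a - coord j b / eucl b) * (coord k b / eucl b))) := by
    rw [Uc_eq, Uc_eq]; ring
  have hpi : |-(1 / (4 * π))| ≤ 1 := by
    rw [abs_neg, abs_of_pos (by positivity)]
    exact div_le_one_of_le₀ (by linarith [Real.pi_gt_three]) (by positivity)
  rw [e, abs_mul]
  calc _ ≤ 1 * (D + 4 * D) := by
        gcongr
        exact (abs_add_le _ _).trans (add_le_add hl hp)
    _ ≤ 5 * (2 / r * ‖a - b‖) := by linarith
    _ = _ := by ring

lemma abs_Pk_le {r : ℝ} (hr : 0 < r) {a : ℝ × ℝ} (ha : r ≤ eucl a) (k : Fin 2) :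
    |Pk k a| ≤ 1 / r := by
  have ha0 := hr.trans_le ha
  have e : Pk k a = -(1 / (2 * π)) * ((coord k a / eucl a) * (1 / eucl a)) := by
    rw [div_mul_div_comm, ← sq (eucl a), eucl_sq, mul_one, ← mul_div_assoc]
    rfl
  have hpi : |-(1 / (2 * π))| ≤ 1 := by
    rw [abs_neg, abs_of_pos (by positivity)]
    exact div_le_one_of_le₀ (by linarith [Real.pi_gt_three]) (by positivity)
  rw [e, abs_mul, abs_mul, abs_of_pos (show 0 < 1 / eucl a by positivity)]
  calc _ ≤ 1 * (1 * (1 / r)) := by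
        gcongr
        exact abs_coord_div_le _ _
    _ = _ := by ring

/-- Off the graph the integrand of the velocity potential has no singularity. -/
lemma integrable_Uc {f g : ℝ → ℝ} (hf : Continuous f) (hg : Continuous g)
    (hgs : HasCompactSupport g) {x : ℝ × ℝ} (hx : x.2 ≠ f x.1) (k j : Fin 2) :
    Integrable (fun s => Uc k j (x - (s, f s)) * g s) := by
  have hγ : Continuous fun s : ℝ => x - (s, f s) := by fun_prop
  have hE : Continuous fun s : ℝ => eucl (x - (s, f s)) := by
    unfold eucl; fun_prop
  have h0 : ∀ s, eucl (x - (s, f s)) ≠ 0 := by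
    intro s hs
    have h2 := eucl_sq (x - (s, f s))
    rw [hs] at h2
    simp only [Prod.fst_sub, Prod.snd_sub] at h2
    have h3 : x.1 - s = 0 := by
      refine pow_eq_zero_iff two_ne_zero |>.1 ?_
      nlinarith [sq_nonneg (x.1 - s), sq_nonneg (x.2 - f s)]
    have h4 : x.2 - f s = 0 := by
      refine pow_eq_zero_iff two_ne_zero |>.1 ?_
      nlinarith [sq_nonneg (x.1 - s), sq_nonneg (x.2 - f s)]
    apply hx
    rw [sub_eq_zero.1 h3, sub_eq_zero.1 h4]
  have hU : Continuous fun s : ℝ => Uc k j (x - (s, f s)) := by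
    simp_rw [Uc_eq]
    have hc : ∀ i, Continuous fun s : ℝ => coord i (x - (s, f s)) / eucl (x - (s, f s)) :=
      fun i => ((continuous_coord i).comp hγ).div hE h0
    exact continuous_const.mul
      ((continuous_const.mul (hE.log h0).neg).add ((hc j).mul (hc k)))
  exact (hU.mul hg).integrable_of_hasCompactSupport hgs.mul_left

/-- A continuous curve is bounded over the support of a compactly supported function. -/
lemma exists_eucl_le {f g : ℝ → ℝ} (hf : Continuous f) (hgs : HasCompactSupport g) :
    ∃ M : ℝ, ∀ s, g s ≠ 0 → eucl (s, f s) ≤ M := by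
  have hE : Continuous fun s : ℝ => eucl (s, f s) := by
    unfold eucl; fun_prop
  obtain ⟨M, hM⟩ := hgs.isCompact.bddAbove_image hE.continuousOn
  exact ⟨M, fun s hs => hM ⟨s, subset_tsupport g hs, rfl⟩⟩

/-- For continuous `f` with graph `Γ = {x : x₂ = f(x₁)}` and continuous compactly
supported `β`, the single layer potentials satisfy the decay estimates
`|Π(x)| ≤ C/|x|` and `‖∇u(x)‖_F ≤ C/|x|` for `x ∈ ℝ² ∖ Γ` with `|x| ≥ R`, for
suitable constants `C, R > 0`; here `|x| = (x₁² + x₂²)^{1/2}` and `‖∇u‖_F` is the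
Frobenius norm of the Jacobian matrix of `u`. -/
theorem single_layer_potential_decay
    (f : ℝ → ℝ) (hf : Continuous f)
    (β : Fin 2 → ℝ → ℝ) (hβc : ∀ k, Continuous (β k))
    (hβs : ∀ k, HasCompactSupport (β k)) :
    ∃ C > (0 : ℝ), ∃ R > (0 : ℝ), ∀ x : ℝ × ℝ, x.2 ≠ f x.1 →
      R ≤ Real.sqrt (x.1 ^ 2 + x.2 ^ 2) →
      |slpP f β x| ≤ C / Real.sqrt (x.1 ^ 2 + x.2 ^ 2) ∧
      Real.sqrt ((pd1 (slp f β 0) x) ^ 2 + (pd2 (slp f β 0) x) ^ 2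
          + (pd1 (slp f β 1) x) ^ 2 + (pd2 (slp f β 1) x) ^ 2)
        ≤ C / Real.sqrt (x.1 ^ 2 + x.2 ^ 2) := by
  choose Mk hMk using fun k => exists_eucl_le hf (hβs k)
  set M : ℝ := |Mk 0| + |Mk 1| with hMdef
  have hM0 : 0 ≤ M := by positivity
  have hM : ∀ k s, β k s ≠ 0 → eucl (s, f s) ≤ M := by
    intro k s hs
    refine (hMk k s hs).trans ((le_abs_self _).trans ?_)
    fin_cases k
    · exact le_add_of_nonneg_right (abs_nonneg _)
    · exact le_add_of_nonneg_left (abs_nonneg _)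
  have hβi : ∀ k, Integrable (fun s => |β k s|) := fun k =>
    ((hβc k).integrable_of_hasCompactSupport (hβs k)).abs
  set B : ℝ := ∑ k : Fin 2, ∫ s, |β k s| with hB
  have hB0 : 0 ≤ B := Finset.sum_nonneg fun k _ => integral_nonneg fun s => abs_nonneg _
  refine ⟨40 * B + 1, by positivity, 4 * M + 1, by positivity, fun x hx hR => ?_⟩
  change 4 * M + 1 ≤ eucl x at hR
  change _ ≤ _ / eucl x ∧ _ ≤ _ / eucl x
  have hx0 : 0 < eucl x := by linarith
  have hr : 0 < eucl x / 2 := by positivity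
  have hfar : ∀ y : ℝ × ℝ, eucl (y - x) ≤ eucl x / 4 → ∀ k s, β k s ≠ 0 →
      eucl x / 2 ≤ eucl (y - (s, f s)) := by
    intro y hy k s hs
    have h1 := (abs_le.1 (abs_eucl_sub_le y x)).1
    have h2 := (abs_le.1 (abs_eucl_sub_le y (s, f s))).2
    have h3 := hM k s hs
    linarith
  have hxx : eucl (x - x) ≤ eucl x / 4 := by
    simp [eucl]
    positivity
  constructor
  · have hk : ∀ k, |∫ s, Pk k (x - (s, f s)) * β k s| ≤ 1 / (eucl x / 2) * ∫ s, |β k s| := by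
      intro k
      rw [← integral_const_mul, ← Real.norm_eq_abs]
      refine norm_integral_le_of_norm_le ((hβi k).const_mul _) (ae_of_all _ fun s => ?_)
      rw [Real.norm_eq_abs, abs_mul]
      by_cases hs : β k s = 0
      · simp [hs]
      · gcongr
        exact abs_Pk_le hr (hfar x hxx k s hs) k
    unfold slpP
    rw [abs_neg]
    calc _ ≤ ∑ k : Fin 2, 1 / (eucl x / 2) * ∫ s, |β k s| :=
          (Finset.abs_sum_le_sum_abs _ _).trans (Finset.sum_le_sum fun k _ => hk k)
      _ = 2 * B / eucl x := by
          rw [← Finset.mul_sum, ← hB]; field_simp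
      _ ≤ _ := by
          gcongr
          linarith
  · have hlip : ∀ j, ∀ᶠ y in nhds x,
        ‖slp f β j y - slp f β j x‖ ≤ 20 * B / eucl x * ‖y - x‖ := by
      intro j
      have hg : ∀ᶠ y : ℝ × ℝ in nhds x, y.2 ≠ f y.1 :=
        (isOpen_ne_fun continuous_snd (hf.comp continuous_fst)).mem_nhds hx
      have hc : ∀ᶠ y in nhds x, ‖y - x‖ < eucl x / 8 := by
        filter_upwards [Metric.ball_mem_nhds x (show 0 < eucl x / 8 by positivity)] with y hy
        rwa [mem_ball_iff_norm] at hy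
      filter_upwards [hg, hc] with y hy hyx
      have hyx2 : eucl (y - x) ≤ eucl x / 4 := by
        linarith [eucl_le (y - x)]
      have hk : ∀ k, |(∫ s, Uc k j (x - (s, f s)) * β k s)
          - ∫ s, Uc k j (y - (s, f s)) * β k s|
          ≤ 10 / (eucl x / 2) * ‖y - x‖ * ∫ s, |β k s| := by
        intro k
        rw [← integral_sub (integrable_Uc hf (hβc k) (hβs k) hx k j)
          (integrable_Uc hf (hβc k) (hβs k) hy k j), ← integral_const_mul, ← Real.norm_eq_abs]
        refine norm_integral_le_of_norm_le ((hβi k).const_mul _) (ae_of_all _ fun s => ?_)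
        rw [Real.norm_eq_abs, ← sub_mul, abs_mul]
        by_cases hs : β k s = 0
        · simp [hs]
        · gcongr
          have h := abs_Uc_sub_le hr (hfar x hxx k s hs) (hfar y hyx2 k s hs) k j
          rwa [sub_sub_sub_cancel_right, norm_sub_rev] at h
      unfold slp
      rw [Real.norm_eq_abs, neg_sub_neg, ← Finset.sum_sub_distrib]
      calc _ ≤ ∑ k : Fin 2, 10 / (eucl x / 2) * ‖y - x‖ * ∫ s, |β k s| :=
            (Finset.abs_sum_le_sum_abs _ _).trans (Finset.sum_le_sum fun k _ => hk k)
        _ = _ := by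
            rw [← Finset.mul_sum, ← hB]; field_simp; ring
    have hL : 0 ≤ 20 * B / eucl x := by positivity
    have hd : ∀ j, ‖fderiv ℝ (slp f β j) x‖ ≤ 20 * B / eucl x := fun j =>
      norm_fderiv_le_of_lip' ℝ hL (hlip j)
    have hv : ∀ j (v : ℝ × ℝ), ‖v‖ ≤ 1 →
        (fderiv ℝ (slp f β j) x v) ^ 2 ≤ (20 * B / eucl x) ^ 2 := by
      intro j v hv
      rw [← sq_abs]
      gcongr
      calc _ ≤ ‖fderiv ℝ (slp f β j) x‖ * ‖v‖ := (fderiv ℝ (slp f β j) x).le_opNorm v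
        _ ≤ 20 * B / eucl x * 1 := by
            gcongr
            exact hd j
        _ = _ := mul_one _
    have e1 : ‖((1, 0) : ℝ × ℝ)‖ ≤ 1 := by simp [Prod.norm_def]
    have e2 : ‖((0, 1) : ℝ × ℝ)‖ ≤ 1 := by simp [Prod.norm_def]
    -- four entries of size at most `20 B / |x|` have Frobenius norm at most twice that
    calc _ ≤ 2 * (20 * B / eucl x) := by
          refine Real.sqrt_le_iff.2 ⟨by positivity, ?_⟩
          unfold pd1 pd2
          linarith [hv 0 _ e1, hv 0 _ e2, hv 1 _ e1, hv 1 _ e2]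
      _ = 40 * B / eucl x := by ring
      _ ≤ _ := by
          gcongr
          linarith
end
end
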